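/- arXiv:2308.15026 — 3 statements merged into one kernel-verified Lean document; each statement's English description precedes it below -/
import Mathlib

section
/- Let ζ ∈ (-1/2, ∞) and α ∈ (0,2). Then there exist constants c, C > 0 (depending only on ζ and α) such that for all r, s > 0: c / (|r-s|^{1+α}(r+s)^{2ζ} + (1+r+s)^{2ζ}) ≤ p_ζ^{(α)}(1,r,s) ≤ C / (|r-s|^{1+α}(r+s)^{2ζ} + (1+r+s)^{2ζ}). -/
open MeasureTheory Real Set Filter

/-- Modified Bessel function of the first kind of order `ν`. -/
noncomputable def besselI (ν x : ℝ) : ℝ :=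
  ∑' k : ℕ, (x / 2) ^ (2 * (k : ℝ) + ν) / ((Nat.factorial k : ℝ) * Real.Gamma ((k : ℝ) + ν + 1))

/-- The Bessel heat kernel `p_ζ^{(2)}(t,r,s)`. -/
noncomputable def besselHeat (ζ t r s : ℝ) : ℝ :=
  (r * s) ^ ((1 : ℝ) / 2 - ζ) / (2 * t) * Real.exp (-(r ^ 2 + s ^ 2) / (4 * t)) *
    besselI (ζ - 1 / 2) (r * s / (2 * t))

/-- `σ` is a family of `α/2`-stable subordinator densities. -/
def IsStableSubordinatorDensity (α : ℝ) (σ : ℝ → ℝ → ℝ) : Prop :=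
  (∀ t, 0 < t → ∀ τ, 0 < τ → 0 ≤ σ t τ) ∧
  (∀ t, 0 < t → Measurable (σ t)) ∧
  (∀ t l : ℝ, 0 < t → 0 ≤ l →
    (∫ τ in Ioi (0 : ℝ), Real.exp (-τ * l) * σ t τ) = Real.exp (-t * l ^ (α / 2)))

/-- The `α/2`-subordinated Bessel heat kernel `p_ζ^{(α)}(t,r,s)`. -/
noncomputable def subKernel (ζ : ℝ) (σ : ℝ → ℝ → ℝ) (t r s : ℝ) : ℝ :=
  ∫ τ in Ioi (0 : ℝ), besselHeat ζ τ r s * σ t τ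

open Asymptotics Topology Function
open scoped Nat

/-!
By Legendre's duplication formula the Bessel series is the series of `cosh x`, reweighted by a Gamma
quotient of order `(k + 1) ^ (-(ν + 1 / 2))`. The terms with `k` of order `1 + x` carry the mass of
`cosh x`, so `I_ν(x) ≍ x ^ ν * (1 + x) ^ (-(ν + 1 / 2)) * exp x`, and the Bessel heat kernel at time
`τ` is comparable to `τ ^ (-1 / 2) * (2 * τ + r * s) ^ (-ζ) * exp (-(r - s) ^ 2 / (4 * τ))`. Put
`R = 1 + (r - s) ^ 2`. The Laplace transform of the subordinator gives the window `[R / K, R * K]`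
a mass of order `R ^ (-α / 2)`, which proves the lower bound. For the upper bound the Gaussian
factor kills small `τ`: `x ^ (-p) * exp (-1 / (4 * x))` is dominated by `1 - exp (-x)`, whose
integral at scale `R` is again of order `R ^ (-α / 2)`. Hence the subordinated kernel is of order
`R ^ (-1 / 2 - α / 2) * (2 * R + r * s) ^ (-ζ)`, and both `R ≍ (1 + |r - s|) ^ 2` and
`2 * R + r * s ≍ (1 + r + s) ^ 2`.
-/

section Comparability

variable {X ι : Type*} {S : Set X}

theorem isTheta_principal_iff_of_nonneg {f g : X → ℝ} (hf : ∀ x ∈ S, 0 ≤ f x)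
    (hg : ∀ x ∈ S, 0 ≤ g x) :
    f =Θ[𝓟 S] g ↔ ∃ c C, 0 < c ∧ 0 < C ∧ ∀ x ∈ S, c * g x ≤ f x ∧ f x ≤ C * g x := by
  constructor
  · rintro ⟨hfg, hgf⟩
    obtain ⟨C, hC, hfg⟩ := hfg.exists_pos
    obtain ⟨c, hc, hgf⟩ := hgf.exists_pos
    rw [isBigOWith_principal] at hfg hgf
    refine ⟨c⁻¹, C, inv_pos.2 hc, hC, fun x hx => ?_⟩
    have hle := hfg x hx
    have hge := hgf x hx
    rw [norm_of_nonneg (hf x hx), norm_of_nonneg (hg x hx)] at hle hge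
    exact ⟨(inv_mul_le_iff₀ hc).2 hge, hle⟩
  · rintro ⟨c, C, hc, -, h⟩
    refine ⟨isBigO_principal.2 ⟨C, fun x hx => ?_⟩, isBigO_principal.2 ⟨c⁻¹, fun x hx => ?_⟩⟩ <;>
      rw [norm_of_nonneg (hf x hx), norm_of_nonneg (hg x hx)]
    exacts [(h x hx).2, (le_inv_mul_iff₀ hc).2 (h x hx).1]

theorem isTheta_comp_tendsto {Y E F : Type*} [Norm E] [Norm F] {f : X → E} {g : X → F}
    {l : Filter X} {l' : Filter Y} {k : Y → X} (h : f =Θ[l] g)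
    (hk : Tendsto k l' l) : (f ∘ k) =Θ[l'] (g ∘ k) :=
  ⟨h.isBigO.comp_tendsto hk, h.symm.isBigO.comp_tendsto hk⟩

theorem isBigO_tsum {E : Type*} [NormedAddCommGroup E] {f : X → ι → E} {g : X → ι → ℝ}
    (h : uncurry f =O[𝓟 (S ×ˢ univ)] uncurry g) (hg : ∀ x ∈ S, ∀ i, 0 ≤ g x i)
    (hgs : ∀ x ∈ S, Summable (g x)) :
    (fun x => ∑' i, f x i) =O[𝓟 S] fun x => ∑' i, g x i := by
  obtain ⟨C, hC⟩ := isBigO_principal.1 h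
  refine isBigO_principal.2 ⟨C, fun x hx => ?_⟩
  rw [norm_of_nonneg (tsum_nonneg (hg x hx))]
  refine tsum_of_norm_bounded ((hgs x hx).hasSum.mul_left C) fun i => ?_
  simpa only [uncurry_apply_pair, norm_of_nonneg (hg x hx i)] using hC (x, i) ⟨hx, mem_univ i⟩

theorem isTheta_tsum {f g : X → ι → ℝ} (h : uncurry f =Θ[𝓟 (S ×ˢ univ)] uncurry g)
    (hf : ∀ x ∈ S, ∀ i, 0 ≤ f x i) (hg : ∀ x ∈ S, ∀ i, 0 ≤ g x i)
    (hgs : ∀ x ∈ S, Summable (g x)) :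
    (fun x => ∑' i, f x i) =Θ[𝓟 S] fun x => ∑' i, g x i := by
  obtain ⟨C, hC⟩ := isBigO_principal.1 h.isBigO
  have hfs (x) (hx : x ∈ S) : Summable (f x) :=
    ((hgs x hx).norm.mul_left C).of_norm_bounded fun i => hC (x, i) ⟨hx, mem_univ i⟩
  exact ⟨isBigO_tsum h.isBigO hg hgs, isBigO_tsum h.symm.isBigO hf hfs⟩

variable [MeasurableSpace ι] {μ : Measure ι} {T : Set ι}

theorem isBigO_setIntegral {E : Type*} [NormedAddCommGroup E] [NormedSpace ℝ E] {f : X → ι → E}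
    {g : X → ι → ℝ} (h : uncurry f =O[𝓟 (S ×ˢ T)] uncurry g) (hT : MeasurableSet T)
    (hg : ∀ x ∈ S, ∀ i ∈ T, 0 ≤ g x i) (hgi : ∀ x ∈ S, IntegrableOn (g x) T μ) :
    (fun x => ∫ i in T, f x i ∂μ) =O[𝓟 S] fun x => ∫ i in T, g x i ∂μ := by
  obtain ⟨C, hC⟩ := isBigO_principal.1 h
  refine isBigO_principal.2 ⟨C, fun x hx => ?_⟩
  rw [norm_of_nonneg (setIntegral_nonneg hT (hg x hx)), ← integral_const_mul]
  refine norm_integral_le_of_norm_le ((hgi x hx).const_mul C) ?_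
  filter_upwards [ae_restrict_mem hT] with i hi
  simpa only [uncurry_apply_pair, norm_of_nonneg (hg x hx i hi)] using hC (x, i) ⟨hx, hi⟩

theorem isTheta_setIntegral {f g : X → ι → ℝ} (h : uncurry f =Θ[𝓟 (S ×ˢ T)] uncurry g)
    (hT : MeasurableSet T) (hf : ∀ x ∈ S, ∀ i ∈ T, 0 ≤ f x i) (hg : ∀ x ∈ S, ∀ i ∈ T, 0 ≤ g x i)
    (hfm : ∀ x ∈ S, AEStronglyMeasurable (f x) (μ.restrict T))
    (hgi : ∀ x ∈ S, IntegrableOn (g x) T μ) :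
    (fun x => ∫ i in T, f x i ∂μ) =Θ[𝓟 S] fun x => ∫ i in T, g x i ∂μ := by
  obtain ⟨C, hC⟩ := isBigO_principal.1 h.isBigO
  have hfi (x) (hx : x ∈ S) : IntegrableOn (f x) T μ := by
    refine ((hgi x hx).norm.const_mul C).mono' (hfm x hx) ?_
    filter_upwards [ae_restrict_mem hT] with i hi using hC (x, i) ⟨hx, hi⟩
  exact ⟨isBigO_setIntegral h.isBigO hT hg hgi, isBigO_setIntegral h.symm.isBigO hT hf hfi⟩

end Comparability

/-! ### Gamma quotients -/

theorem prod_range_add_eq_Gamma_div {s : ℝ} (hs : 0 < s) (n : ℕ) :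
    ∏ j ∈ Finset.range n, (s + j) = Gamma (s + n) / Gamma s := by
  have := (Gamma_pos_of_pos hs).ne'
  induction n with
  | zero => simp [this]
  | succ n ih =>
    rw [Finset.prod_range_succ, ih, Nat.cast_succ, ← add_assoc, Gamma_add_one (by positivity)]
    ring

theorem tendsto_rpow_mul_factorial_div_Gamma {s : ℝ} (hs : 0 < s) :
    Tendsto (fun k : ℕ => ((k : ℝ) + 1) ^ (s - 1) * k ! / Gamma (k + s)) atTop (𝓝 1) := by
  have hGs := (Gamma_pos_of_pos hs).ne'
  have hlim : Tendsto (fun k : ℕ =>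
      GammaSeq s k / Gamma s * (k / (k + s))⁻¹ * (k / (k + 1) : ℝ)⁻¹ ^ (s - 1)) atTop (𝓝 1) := by
    simpa [hGs] using (((GammaSeq_tendsto_Gamma s).div_const (Gamma s)).mul
      ((tendsto_natCast_div_add_atTop s).inv₀ one_ne_zero)).mul
      (((tendsto_natCast_div_add_atTop (1 : ℝ)).inv₀ one_ne_zero).rpow_const (p := s - 1)
        (by simp))
  refine hlim.congr' ?_
  filter_upwards [eventually_gt_atTop 0] with k hk
  have hk : (0 : ℝ) < k := by exact_mod_cast hk
  rw [GammaSeq, prod_range_add_eq_Gamma_div hs, Nat.cast_succ, ← add_assoc,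
    Gamma_add_one (by positivity), add_comm s, inv_div, inv_div,
    div_rpow (by positivity) hk.le, rpow_sub_one hk.ne']
  field_simp

theorem isTheta_Gamma_natCast_add {s : ℝ} (hs : 0 < s) :
    (fun k : ℕ => Gamma (k + s)) =Θ[⊤] fun k : ℕ => ((k : ℝ) + 1) ^ (s - 1) * k ! := by
  have h : (fun k : ℕ => Gamma (k + s)) =Θ[atTop] fun k : ℕ => ((k : ℝ) + 1) ^ (s - 1) * k ! :=
    isTheta_of_div_tendsto_nhds_ne_zero (tendsto_rpow_mul_factorial_div_Gamma hs) one_ne_zero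
  have hGamma (k : ℕ) : Gamma (k + s) ≠ 0 := (Gamma_pos_of_pos (by positivity)).ne'
  have hpow (k : ℕ) : ((k : ℝ) + 1) ^ (s - 1) * k ! ≠ 0 := by positivity
  exact ⟨h.isBigO.nat_of_atTop (.of_forall fun k hk => absurd hk (hpow k)),
    h.symm.isBigO.nat_of_atTop (.of_forall fun k hk => absurd hk (hGamma k))⟩

theorem isTheta_Gamma_div_Gamma {a b : ℝ} (ha : 0 < a) (hb : 0 < b) :
    (fun k : ℕ => Gamma (k + a) / Gamma (k + b)) =Θ[⊤] fun k : ℕ => ((k : ℝ) + 1) ^ (a - b) := by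
  refine ((isTheta_Gamma_natCast_add ha).div (isTheta_Gamma_natCast_add hb)).trans_eventuallyEq
    (.of_forall fun k => ?_)
  dsimp only
  rw [mul_div_mul_right _ _ (by positivity), ← rpow_sub (by positivity), sub_sub_sub_cancel_right]

theorem factorial_mul_Gamma_add_half (k : ℕ) :
    (k ! : ℝ) * Gamma (k + 1 / 2) = (2 * k)! / 4 ^ k * √π := by
  have h := Gamma_mul_Gamma_add_half ((k : ℝ) + 1 / 2)
  rw [show (k : ℝ) + 1 / 2 + 1 / 2 = k + 1 by ring, Gamma_nat_eq_factorial,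
    show 2 * ((k : ℝ) + 1 / 2) = ((2 * k : ℕ) : ℝ) + 1 by push_cast; ring,
    Gamma_nat_eq_factorial, show (1 : ℝ) - (((2 * k : ℕ) : ℝ) + 1) = -((2 * k : ℕ) : ℝ) by ring,
    rpow_neg zero_le_two, rpow_natCast, pow_mul, show (2 : ℝ) ^ 2 = 4 by norm_num] at h
  rw [mul_comm, h, div_eq_mul_inv]

/-! ### Moments of the hyperbolic cosine series -/

/-- The moment of order `q` of the cosh weights `x ^ (2 * k) / (2 * k)!`, normalised by `1 + x`,
the order of magnitude of the indices `k` that carry the sum. -/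
noncomputable def coshMoment (q x : ℝ) : ℝ :=
  ∑' k : ℕ, x ^ (2 * k) / (2 * k)! * (((k : ℝ) + 1) / (1 + x)) ^ q

theorem rpow_le_rpow_add_rpow {y a b q : ℝ} (hy : 0 < y) (ha : a ≤ q) (hb : q ≤ b) :
    y ^ q ≤ y ^ a + y ^ b := by
  rcases le_total y 1 with h | h
  · exact (rpow_le_rpow_of_exponent_ge hy h ha).trans (le_add_of_nonneg_right (by positivity))
  · exact (rpow_le_rpow_of_exponent_le h hb).trans (le_add_of_nonneg_left (by positivity))

theorem one_le_rpow_mul_rpow_add {L y : ℝ} (q : ℝ) (hL : 1 ≤ L) (hy : 0 < y) :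
    1 ≤ L ^ |q| * y ^ q + (y + y⁻¹) / L := by
  have hL0 : 0 < L := one_pos.trans_le hL
  by_cases h : y ≤ L ∧ y⁻¹ ≤ L
  · have hpow : y ^ (-q) ≤ L ^ |q| := by
      rcases le_total 0 q with hq | hq
      · rw [abs_of_nonneg hq, rpow_neg hy.le, ← inv_rpow hy.le]
        exact rpow_le_rpow (by positivity) h.2 hq
      · rw [abs_of_nonpos hq]
        exact rpow_le_rpow hy.le h.1 (neg_nonneg.2 hq)
    calc (1 : ℝ) = y ^ (-q) * y ^ q := by rw [← rpow_add hy, neg_add_cancel, rpow_zero]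
      _ ≤ L ^ |q| * y ^ q := by gcongr
      _ ≤ L ^ |q| * y ^ q + (y + y⁻¹) / L := le_add_of_nonneg_right (by positivity)
  · have hsum : L ≤ y + y⁻¹ := by
      have := inv_pos.2 hy
      rcases not_and_or.1 h with h | h <;> linarith
    exact ((one_le_div hL0).2 hsum).trans (le_add_of_nonneg_left (by positivity))

section coshMoment

variable {q x : ℝ}

theorem summable_coshMoment (q : ℝ) (hx : 0 < x) :
    Summable fun k : ℕ => x ^ (2 * k) / (2 * k)! * (((k : ℝ) + 1) / (1 + x)) ^ q := by
  have hpow (k : ℕ) : ((k : ℝ) + 1) ^ q ≤ ((2 : ℝ) ^ |q|) ^ (2 * k) := by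
    have hk : (k : ℝ) + 1 ≤ 2 ^ (2 * k : ℕ) := by
      exact_mod_cast Nat.lt_two_pow_self.trans_le (pow_le_pow_right₀ one_le_two (by lia))
    calc ((k : ℝ) + 1) ^ q ≤ ((k : ℝ) + 1) ^ |q| :=
          rpow_le_rpow_of_exponent_le (by simp) (le_abs_self q)
      _ ≤ ((2 : ℝ) ^ (2 * k : ℕ)) ^ |q| := rpow_le_rpow (by positivity) hk (abs_nonneg q)
      _ = ((2 : ℝ) ^ |q|) ^ (2 * k) := by
          rw [← rpow_natCast, ← rpow_mul zero_le_two, mul_comm, rpow_mul zero_le_two, rpow_natCast]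
  refine .of_nonneg_of_le (fun k => by positivity) (fun k => ?_)
    ((hasSum_cosh (x * 2 ^ |q|)).summable.div_const ((1 + x) ^ q))
  rw [div_rpow (by positivity) (by positivity), mul_pow, div_mul_div_comm, div_div]
  gcongr
  exact hpow k

theorem coshMoment_le_add {a b : ℝ} (hx : 0 < x) (ha : a ≤ q) (hb : q ≤ b) :
    coshMoment q x ≤ coshMoment a x + coshMoment b x := by
  rw [coshMoment, coshMoment, coshMoment,
    ← (summable_coshMoment a hx).tsum_add (summable_coshMoment b hx)]
  refine (summable_coshMoment q hx).tsum_le_tsum (fun k => ?_)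
    ((summable_coshMoment a hx).add (summable_coshMoment b hx))
  rw [← mul_add]
  gcongr
  exact rpow_le_rpow_add_rpow (by positivity) ha hb

theorem coshMoment_nonneg (q : ℝ) (hx : 0 < x) : 0 ≤ coshMoment q x :=
  tsum_nonneg fun _ => by positivity

theorem coshMoment_zero (x : ℝ) : coshMoment 0 x = cosh x := by
  simp only [coshMoment, rpow_zero, mul_one, cosh_eq_tsum]

theorem hasSum_even_mul_natCast (x : ℝ) :
    HasSum (fun k : ℕ => x ^ (2 * k) / (2 * k)! * (k : ℝ)) (x / 2 * sinh x) := by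
  rw [← hasSum_nat_add_iff' 1, Finset.sum_range_one, Nat.cast_zero, mul_zero, sub_zero]
  refine ((hasSum_sinh x).mul_left (x / 2)).congr_fun fun k => ?_
  rw [show 2 * (k + 1) = 2 * k + 1 + 1 by ring, Nat.factorial_succ (2 * k + 1)]
  push_cast
  field_simp
  ring

theorem coshMoment_one_le (hx : 0 < x) : coshMoment 1 x ≤ exp x := by
  have hsum : coshMoment 1 x = (x / 2 * sinh x + cosh x) / (1 + x) := by
    rw [coshMoment,
      ← (((hasSum_even_mul_natCast x).add (hasSum_cosh x)).div_const (1 + x)).tsum_eq]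
    refine tsum_congr fun k => ?_
    rw [rpow_one]
    ring
  have hsinh : sinh x ≤ exp x := by linarith [sinh_add_cosh x, cosh_pos x]
  have hcosh : cosh x ≤ exp x := by linarith [sinh_add_cosh x, sinh_pos_iff.2 hx]
  rw [hsum, div_le_iff₀ (by positivity)]
  nlinarith [mul_le_mul_of_nonneg_left hsinh hx.le, mul_pos hx (exp_pos x)]

theorem injective_two_mul_add (m : ℕ) : Injective fun k : ℕ => 2 * k + m :=
  fun a b h => by dsimp only at h; lia

theorem tsum_even_add_le_exp (hx : 0 ≤ x) (m : ℕ) :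
    ∑' k : ℕ, x ^ (2 * k + m) / (2 * k + m)! ≤ exp x := by
  rw [exp_eq_exp_ℝ, NormedSpace.exp_eq_tsum_div]
  exact tsum_comp_le_tsum_of_inj (summable_pow_div_factorial x) (fun _ => by positivity)
    (injective_two_mul_add m)

theorem factorial_two_mul_add_le (k m : ℕ) :
    (2 * k + m)! ≤ (2 * k)! * ((m + 2) * (k + 1)) ^ m := by
  rw [← Nat.factorial_mul_ascFactorial]
  gcongr
  exact (Nat.ascFactorial_le_pow_add (2 * k) m).trans (Nat.pow_le_pow_left (by nlinarith) m)

theorem coshMoment_neg_natCast_term_le (hx : 0 ≤ x) (k m : ℕ) :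
    x ^ (2 * k) / (2 * k)! * (((k : ℝ) + 1) / (1 + x)) ^ (-(m : ℝ)) ≤
      2 ^ (m - 1) * (x ^ (2 * k) / (2 * k)! + (m + 2) ^ m * (x ^ (2 * k + m) / (2 * k + m)!)) := by
  have hfac : ((2 * k + m)! : ℝ) ≤ (2 * k)! * ((m + 2) * (k + 1)) ^ m := by
    exact_mod_cast factorial_two_mul_add_le k m
  calc x ^ (2 * k) / (2 * k)! * (((k : ℝ) + 1) / (1 + x)) ^ (-(m : ℝ))
      = x ^ (2 * k) / (2 * k)! * ((1 + x) ^ m / (k + 1) ^ m) := by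
        rw [rpow_neg (by positivity), ← inv_rpow (by positivity), inv_div, rpow_natCast, div_pow]
    _ ≤ x ^ (2 * k) / (2 * k)! * (2 ^ (m - 1) * (1 ^ m + x ^ m) / (k + 1) ^ m) := by
        gcongr
        exact add_pow_le zero_le_one hx m
    _ = 2 ^ (m - 1) * (x ^ (2 * k) / (2 * k)! / (k + 1) ^ m +
          (m + 2) ^ m * (x ^ (2 * k + m) / ((2 * k)! * ((m + 2) * (k + 1)) ^ m))) := by
        rw [one_pow, mul_pow, pow_add]
        field_simp
    _ ≤ _ := by
        gcongr 2 ^ (m - 1) * (?_ + _ * (_ / ?_))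
        exact div_le_self (by positivity) (one_le_pow₀ (le_add_of_nonneg_left k.cast_nonneg))

theorem isBigO_coshMoment_neg_natCast (m : ℕ) : coshMoment (-m) =O[𝓟 (Ioi 0)] exp := by
  refine isBigO_principal.2 ⟨2 ^ (m - 1) * (1 + (m + 2) ^ m), fun x (hx : 0 < x) => ?_⟩
  have hcosh : cosh x ≤ exp x := by linarith [sinh_add_cosh x, sinh_pos_iff.2 hx]
  have hcosh_summable := (hasSum_cosh x).summable
  have hshift_summable : Summable fun k : ℕ =>
      (m + 2 : ℝ) ^ m * (x ^ (2 * k + m) / (2 * k + m)!) :=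
    ((summable_pow_div_factorial x).comp_injective (injective_two_mul_add m)).mul_left _
  rw [norm_of_nonneg (coshMoment_nonneg _ hx), norm_of_nonneg (exp_pos x).le]
  calc coshMoment (-m) x
      ≤ ∑' k : ℕ, 2 ^ (m - 1) *
          (x ^ (2 * k) / (2 * k)! + (m + 2) ^ m * (x ^ (2 * k + m) / (2 * k + m)!)) :=
        (summable_coshMoment _ hx).tsum_le_tsum (coshMoment_neg_natCast_term_le hx.le · m)
          ((hcosh_summable.add hshift_summable).mul_left _)
    _ = 2 ^ (m - 1) * (cosh x + (m + 2) ^ m * ∑' k : ℕ, x ^ (2 * k + m) / (2 * k + m)!) := by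
        rw [tsum_mul_left, hcosh_summable.tsum_add hshift_summable, tsum_mul_left, cosh_eq_tsum]
    _ ≤ 2 ^ (m - 1) * (exp x + (m + 2) ^ m * exp x) := by
        gcongr
        exact tsum_even_add_le_exp hx.le m
    _ = 2 ^ (m - 1) * (1 + (m + 2) ^ m) * exp x := by ring

theorem coshMoment_zero_le {L : ℝ} (q : ℝ) (hL : 1 ≤ L) (hx : 0 < x) :
    coshMoment 0 x ≤ L ^ |q| * coshMoment q x + (coshMoment 1 x + coshMoment (-1) x) / L := by
  have hq := (summable_coshMoment q hx).mul_left (L ^ |q|)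
  have hend := ((summable_coshMoment 1 hx).add (summable_coshMoment (-1) hx)).div_const L
  simp only [coshMoment]
  rw [← (summable_coshMoment 1 hx).tsum_add (summable_coshMoment (-1) hx), ← tsum_mul_left,
    ← tsum_div_const, ← hq.tsum_add hend]
  refine (summable_coshMoment 0 hx).tsum_le_tsum (fun k => ?_) (hq.add hend)
  have hweight : 0 ≤ x ^ (2 * k) / (2 * k)! := by positivity
  have hy : 0 < ((k : ℝ) + 1) / (1 + x) := by positivity
  rw [rpow_zero, rpow_one, rpow_neg_one]
  calc x ^ (2 * k) / (2 * k)! * 1 ≤ _ :=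
        mul_le_mul_of_nonneg_left (one_le_rpow_mul_rpow_add q hL hy) hweight
    _ = _ := by ring

theorem exp_isBigO_coshMoment (q : ℝ) : exp =O[𝓟 (Ioi 0)] coshMoment q := by
  obtain ⟨C, hC, hneg⟩ := (isBigO_coshMoment_neg_natCast 1).exists_pos
  rw [isBigOWith_principal, Nat.cast_one] at hneg
  set L := 4 * (C + 1)
  refine isBigO_principal.2 ⟨4 * L ^ |q|, fun x (hx : 0 < x) => ?_⟩
  have hneg := hneg x hx
  rw [norm_of_nonneg (coshMoment_nonneg _ hx), norm_of_nonneg (exp_pos x).le] at hneg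
  rw [norm_of_nonneg (coshMoment_nonneg _ hx), norm_of_nonneg (exp_pos x).le]
  have hcosh : exp x / 2 ≤ coshMoment 0 x := by
    rw [coshMoment_zero, cosh_eq]
    linarith [exp_pos (-x)]
  have hend : (coshMoment 1 x + coshMoment (-1) x) / L ≤ exp x / 4 := by
    rw [div_le_iff₀ (by positivity)]
    linarith [coshMoment_one_le hx]
  linarith [coshMoment_zero_le (L := L) q (by linarith) hx]

theorem isTheta_coshMoment (hq : q ≤ 1) : coshMoment q =Θ[𝓟 (Ioi 0)] exp := by
  refine ⟨?_, exp_isBigO_coshMoment q⟩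
  have hone : coshMoment 1 =O[𝓟 (Ioi 0)] exp := isBigO_principal.2 ⟨1, fun x hx => by
    rw [norm_of_nonneg (coshMoment_nonneg _ hx), norm_of_nonneg (exp_pos x).le, one_mul]
    exact coshMoment_one_le hx⟩
  refine .trans ?_ ((isBigO_coshMoment_neg_natCast ⌈-q⌉₊).add hone)
  refine isBigO_principal.2 ⟨1, fun x hx => ?_⟩
  have hle := coshMoment_le_add (x := x) hx (neg_le.1 (Nat.le_ceil (-q))) hq
  rw [one_mul, norm_of_nonneg (coshMoment_nonneg q hx)]
  exact hle.trans (le_abs_self _)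

end coshMoment

/-! ### The modified Bessel function -/

section besselI

variable {ν x : ℝ}

theorem besselI_eq_tsum (ν : ℝ) (hx : 0 < x) :
    besselI ν x = (x / 2) ^ ν / √π * ∑' k : ℕ,
      x ^ (2 * k) / (2 * k)! * (Gamma (k + 1 / 2) / Gamma (k + (ν + 1))) := by
  rw [besselI, ← tsum_mul_left]
  refine tsum_congr fun k => ?_
  have hfac : ((2 * k)! : ℝ) = k ! * Gamma (k + 1 / 2) * 4 ^ k / √π := by
    rw [factorial_mul_Gamma_add_half]
    field_simp
  have := (Gamma_pos_of_pos (by positivity : (0 : ℝ) < k + 1 / 2)).ne'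
  rw [hfac, rpow_add (by positivity), show 2 * (k : ℝ) = (2 * k : ℕ) by push_cast; ring,
    rpow_natCast, div_pow, pow_mul 2 2 k, show (2 : ℝ) ^ 2 = 4 by norm_num, add_assoc]
  field_simp

theorem besselI_term_nonneg (hν : -1 ≤ ν) (hx : 0 ≤ x) (k : ℕ) :
    0 ≤ (x / 2) ^ (2 * (k : ℝ) + ν) / (k ! * Gamma (k + ν + 1)) := by
  have : 0 ≤ Gamma (k + ν + 1) := Gamma_nonneg_of_nonneg (by linarith [k.cast_nonneg (α := ℝ)])
  positivity

theorem besselI_nonneg (hν : -1 ≤ ν) (hx : 0 ≤ x) : 0 ≤ besselI ν x :=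
  tsum_nonneg (besselI_term_nonneg hν hx)

theorem isTheta_tsum_coshWeight_mul_Gamma (hν : -1 < ν) :
    (fun x : ℝ => ∑' k : ℕ, x ^ (2 * k) / (2 * k)! * (Gamma (k + 1 / 2) / Gamma (k + (ν + 1))))
      =Θ[𝓟 (Ioi 0)] fun x => (1 + x) ^ (-(ν + 1 / 2)) * exp x := by
  set q := -(ν + 1 / 2) with hq
  have hGamma : (fun k : ℕ => Gamma (k + 1 / 2) / Gamma (k + (ν + 1)))
      =Θ[⊤] fun k => ((k : ℝ) + 1) ^ q := by
    rw [show q = 1 / 2 - (ν + 1) by ring]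
    exact isTheta_Gamma_div_Gamma (by norm_num) (by linarith)
  have hcomp : (fun p : ℝ × ℕ => Gamma (p.2 + 1 / 2) / Gamma (p.2 + (ν + 1)))
      =Θ[𝓟 (Ioi 0 ×ˢ univ)] fun p => ((p.2 : ℝ) + 1) ^ q :=
    isTheta_comp_tendsto hGamma tendsto_top
  have hterm : (fun p : ℝ × ℕ =>
        p.1 ^ (2 * p.2) / (2 * p.2)! * (Gamma (p.2 + 1 / 2) / Gamma (p.2 + (ν + 1))))
      =Θ[𝓟 (Ioi 0 ×ˢ univ)] fun p =>
        (1 + p.1) ^ q * (p.1 ^ (2 * p.2) / (2 * p.2)! * (((p.2 : ℝ) + 1) / (1 + p.1)) ^ q) := by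
    refine (isTheta_rfl.mul hcomp).trans_eventuallyEq
      (eventually_principal.2 fun ⟨x, k⟩ ⟨(hx : 0 < x), _⟩ => ?_)
    dsimp only
    rw [div_rpow (by positivity) (by positivity)]
    field_simp
  have hGamma_nonneg (k : ℕ) : 0 ≤ Gamma (k + 1 / 2) / Gamma (k + (ν + 1)) :=
    div_nonneg (Gamma_nonneg_of_nonneg (by positivity))
      (Gamma_nonneg_of_nonneg (by linarith [k.cast_nonneg (α := ℝ)]))
  calc (fun x : ℝ => ∑' k : ℕ,
        x ^ (2 * k) / (2 * k)! * (Gamma (k + 1 / 2) / Gamma (k + (ν + 1))))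
      =Θ[𝓟 (Ioi 0)] fun x => ∑' k : ℕ,
        (1 + x) ^ q * (x ^ (2 * k) / (2 * k)! * (((k : ℝ) + 1) / (1 + x)) ^ q) :=
        isTheta_tsum hterm
            (fun x hx k => mul_nonneg (by have := mem_Ioi.1 hx; positivity) (hGamma_nonneg k))
            (fun x hx k => by have := mem_Ioi.1 hx; positivity)
            fun x hx => (summable_coshMoment q hx).mul_left _
    _ =Θ[𝓟 (Ioi 0)] fun x => (1 + x) ^ q * exp x := by
        simp only [tsum_mul_left]
        exact isTheta_rfl.mul (isTheta_coshMoment (by linarith))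

theorem isTheta_besselI (hν : -1 < ν) :
    besselI ν =Θ[𝓟 (Ioi 0)] fun x => x ^ ν * (1 + x) ^ (-(ν + 1 / 2)) * exp x := by
  have hpow : (fun x => (x / 2) ^ ν / √π) =Θ[𝓟 (Ioi 0)] fun x => x ^ ν := by
    have heq : (fun x => (x / 2) ^ ν / √π) =ᶠ[𝓟 (Ioi 0)] fun x => (2 ^ ν * √π)⁻¹ * x ^ ν :=
      eventually_principal.2 fun x hx => by
        dsimp only
        rw [div_rpow (le_of_lt hx) zero_le_two]
        field_simp
    exact heq.trans_isTheta ((isTheta_const_mul_left (by positivity)).2 isTheta_rfl)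
  have hseries : besselI ν =ᶠ[𝓟 (Ioi 0)] fun x => (x / 2) ^ ν / √π * ∑' k : ℕ,
      x ^ (2 * k) / (2 * k)! * (Gamma (k + 1 / 2) / Gamma (k + (ν + 1))) :=
    eventually_principal.2 fun x hx => besselI_eq_tsum ν hx
  simpa only [mul_assoc] using
    hseries.trans_isTheta (hpow.mul (isTheta_tsum_coshWeight_mul_Gamma hν))

theorem measurable_besselI (ν : ℝ) : Measurable (besselI ν) :=
  .tsum fun k => by fun_prop

end besselI

/-! ### The Bessel heat kernel -/

/-- The elementary profile of the Bessel heat kernel at time `τ`, in which `A` stands for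
`(r - s) ^ 2` and `X` for `r * s`. -/
noncomputable def heatProfile (ζ A X τ : ℝ) : ℝ :=
  τ ^ (-(1 / 2) : ℝ) * (2 * τ + X) ^ (-ζ) * exp (-A / (4 * τ))

section besselHeat

variable {ζ r s τ : ℝ}

theorem heatProfile_eq (ζ : ℝ) (hr : 0 < r) (hs : 0 < s) (hτ : 0 < τ) :
    heatProfile ζ ((r - s) ^ 2) (r * s) τ =
      √2 * ((r * s) ^ (1 / 2 - ζ) / (2 * τ) * exp (-(r ^ 2 + s ^ 2) / (4 * τ)) *
        ((r * s / (2 * τ)) ^ (ζ - 1 / 2) * (1 + r * s / (2 * τ)) ^ (-ζ) *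
          exp (r * s / (2 * τ)))) := by
  have hexp : exp (-(r - s) ^ 2 / (4 * τ)) =
      exp (-(r ^ 2 + s ^ 2) / (4 * τ)) * exp (r * s / (2 * τ)) := by
    rw [← exp_add]
    congr 1
    field_simp
    ring
  have hpow : (1 + r * s / (2 * τ)) ^ (-ζ) = (2 * τ + r * s) ^ (-ζ) * (2 * τ) ^ ζ := by
    rw [show 1 + r * s / (2 * τ) = (2 * τ + r * s) / (2 * τ) by field_simp,
      div_rpow (by positivity) (by positivity), rpow_neg (by positivity : 0 ≤ 2 * τ),
      div_inv_eq_mul]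
  have hspace : (r * s) ^ (1 / 2 - ζ) * (r * s / (2 * τ)) ^ (ζ - 1 / 2) =
      (2 * τ) ^ (1 / 2 - ζ) := by
    rw [← neg_sub ζ, rpow_neg (by positivity), rpow_neg (by positivity),
      div_rpow (by positivity) (by positivity)]
    field_simp
  have htime : √2 * ((2 * τ) ^ (1 / 2 - ζ) * (2 * τ) ^ ζ / (2 * τ)) = τ ^ (-(1 / 2) : ℝ) := by
    rw [← rpow_add (by positivity), sub_add_cancel, ← sqrt_eq_rpow, rpow_neg hτ.le,
      ← sqrt_eq_rpow, sqrt_mul zero_le_two]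
    field_simp
    rw [sq_sqrt zero_le_two, sq_sqrt hτ.le]
  rw [heatProfile, hexp, hpow, ← htime, ← hspace]
  ring

theorem isTheta_besselHeat (hζ : -1 / 2 < ζ) :
    (fun p : (ℝ × ℝ) × ℝ => besselHeat ζ p.2 p.1.1 p.1.2)
      =Θ[𝓟 ((Ioi 0 ×ˢ Ioi 0) ×ˢ Ioi 0)]
        fun p => heatProfile ζ ((p.1.1 - p.1.2) ^ 2) (p.1.1 * p.1.2) p.2 := by
  have hmaps : Tendsto (fun p : (ℝ × ℝ) × ℝ => p.1.1 * p.1.2 / (2 * p.2))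
      (𝓟 ((Ioi 0 ×ˢ Ioi 0) ×ˢ Ioi 0)) (𝓟 (Ioi 0)) :=
    tendsto_principal_principal.2 fun ⟨⟨r, s⟩, τ⟩ ⟨⟨hr, hs⟩, hτ⟩ =>
      div_pos (mul_pos (mem_Ioi.1 hr) (mem_Ioi.1 hs)) (mul_pos two_pos (mem_Ioi.1 hτ))
  have hbessel := isTheta_besselI (show -1 < ζ - 1 / 2 by linarith)
  rw [sub_add_cancel] at hbessel
  have hcomp := (isTheta_refl (fun p : (ℝ × ℝ) × ℝ => (p.1.1 * p.1.2) ^ (1 / 2 - ζ) / (2 * p.2) *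
    exp (-(p.1.1 ^ 2 + p.1.2 ^ 2) / (4 * p.2))) _).mul
      (isTheta_comp_tendsto hbessel hmaps)
  refine hcomp.trans ?_
  refine .trans_eventuallyEq ((isTheta_const_mul_right (sqrt_ne_zero'.2 two_pos)).2 isTheta_rfl)
    (eventually_principal.2 fun ⟨⟨r, s⟩, τ⟩ ⟨⟨hr, hs⟩, hτ⟩ => (heatProfile_eq ζ hr hs hτ).symm)

theorem besselHeat_nonneg (hζ : -1 / 2 ≤ ζ) (hr : 0 ≤ r) (hs : 0 ≤ s) (hτ : 0 ≤ τ) :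
    0 ≤ besselHeat ζ τ r s :=
  mul_nonneg (by positivity) (besselI_nonneg (by linarith) (by positivity))

theorem measurable_besselHeat (ζ r s : ℝ) : Measurable fun τ => besselHeat ζ τ r s := by
  have := measurable_besselI (ζ - 1 / 2)
  unfold besselHeat
  fun_prop

end besselHeat

/-! ### Stable subordinator densities -/

theorem div_one_add_le_one_sub_exp_neg {x : ℝ} (hx : 0 ≤ x) : x / (1 + x) ≤ 1 - exp (-x) := by
  have hexp : exp (-x) ≤ (1 + x)⁻¹ := by
    rw [exp_neg]
    exact inv_anti₀ (by positivity) (by linarith [add_one_le_exp x])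
  have hsplit : x / (1 + x) = 1 - (1 + x)⁻¹ := by field_simp; ring
  linarith

theorem rpow_le_rpow_self_mul_exp {q y : ℝ} (hq : 0 < q) (hy : 0 ≤ y) :
    y ^ q ≤ q ^ q * exp y := by
  have hle : y ≤ q * exp (y / q) := by
    rw [← div_le_iff₀' hq]
    linarith [add_one_le_exp (y / q)]
  calc y ^ q ≤ (q * exp (y / q)) ^ q := by gcongr
    _ = q ^ q * exp y := by
        rw [mul_rpow hq.le (exp_pos _).le, ← exp_mul, div_mul_cancel₀ y hq.ne']

theorem exists_rpow_neg_mul_exp_le {p : ℝ} (hp : 0 ≤ p) :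
    ∃ C, 0 < C ∧ ∀ x, 0 < x → x ^ (-p) * exp (-1 / (4 * x)) ≤ C * (1 - exp (-x)) := by
  refine ⟨4 ^ (p + 1) * (p + 1) ^ (p + 1) * exp (1 / 4), by positivity, fun x hx => ?_⟩
  have hpow : (1 + x⁻¹) ^ (p + 1) ≤
      4 ^ (p + 1) * (p + 1) ^ (p + 1) * exp (1 / 4) * exp (x⁻¹ / 4) := by
    have h := rpow_le_rpow_self_mul_exp (q := p + 1) (y := (1 + x⁻¹) / 4) (by positivity)
      (by positivity)
    rw [div_rpow (by positivity) (by positivity), div_le_iff₀' (by positivity), add_div,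
      exp_add] at h
    linarith
  have hexp : exp (-1 / (4 * x)) = (exp (x⁻¹ / 4))⁻¹ := by
    rw [← exp_neg]
    congr 1
    field_simp
  calc x ^ (-p) * exp (-1 / (4 * x))
      ≤ (1 + x⁻¹) ^ p * (exp (x⁻¹ / 4))⁻¹ := by
        rw [hexp, rpow_neg hx.le, ← inv_rpow hx.le]
        gcongr
        linarith
    _ = (1 + x⁻¹) ^ (p + 1) * (exp (x⁻¹ / 4))⁻¹ * (x / (1 + x)) := by
        rw [rpow_add_one (by positivity)]
        field_simp
        ring
    _ ≤ 4 ^ (p + 1) * (p + 1) ^ (p + 1) * exp (1 / 4) * (x / (1 + x)) := by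
        gcongr ?_ * _
        rwa [← div_eq_mul_inv, div_le_iff₀ (exp_pos _)]
    _ ≤ _ := by
        gcongr
        exact div_one_add_le_one_sub_exp_neg hx.le

theorem rpow_one_add_le {q A : ℝ} (hq : 0 ≤ q) (hA : 0 ≤ A) :
    (1 + A) ^ q ≤ 2 ^ q * (1 + A ^ q) := by
  have hmax : (1 + A) ^ q ≤ (2 * max 1 A) ^ q := by
    gcongr
    linarith [le_max_left 1 A, le_max_right 1 A]
  rw [mul_rpow zero_le_two (by positivity)] at hmax
  refine hmax.trans ?_
  gcongr
  rcases max_choice 1 A with h | h <;> rw [h]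
  · rw [one_rpow]
    exact le_add_of_nonneg_right (by positivity)
  · exact le_add_of_nonneg_left zero_le_one

-- The subtracted terms dominate the mass of `1 - exp (-x)` on `x > K` and on `x < K⁻¹`.
theorem one_sub_exp_sub_le_indicator {K x : ℝ} (hK : 0 < K) (hx : 0 ≤ x) :
    (1 - exp (-x)) - 2 * (1 - exp (-(x / K))) - 2 / K * (1 - exp (-(x * K))) ≤
      (Icc K⁻¹ K).indicator 1 x := by
  have hlarge : 0 ≤ 2 * (1 - exp (-(x / K))) := by
    linarith [exp_le_one_iff.2 (neg_nonpos.2 (by positivity : 0 ≤ x / K))]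
  have hsmall : 0 ≤ 2 / K * (1 - exp (-(x * K))) :=
    mul_nonneg (by positivity)
      (by linarith [exp_le_one_iff.2 (neg_nonpos.2 (by positivity : 0 ≤ x * K))])
  by_cases h : x ∈ Icc K⁻¹ K
  · rw [indicator_of_mem h, Pi.one_apply]
    linarith [exp_pos (-x)]
  rw [indicator_of_notMem h]
  rcases not_and_or.1 h with h | h <;> rw [not_le] at h
  · have hxK : x * K ≤ 1 := by
      rw [← le_div_iff₀ hK, one_div]
      exact h.le
    have : x ≤ 2 / K * (1 - exp (-(x * K))) :=
      calc x = 2 / K * (x * K / (1 + 1)) := by field_simp; norm_num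
        _ ≤ 2 / K * (x * K / (1 + x * K)) := by gcongr
        _ ≤ _ := by
            gcongr
            exact div_one_add_le_one_sub_exp_neg (by positivity)
    linarith [one_sub_le_exp_neg x]
  · have hxK : 1 ≤ x / K := (one_le_div hK).2 h.le
    have : 1 / 2 ≤ 1 - exp (-(x / K)) :=
      calc 1 / 2 ≤ x / K / (1 + x / K) := by
            rw [div_le_div_iff₀ two_pos (by positivity)]
            linarith
        _ ≤ _ := div_one_add_le_one_sub_exp_neg (by positivity)
    linarith [exp_pos (-x)]

theorem exists_one_le_rpow_neg_le {a b ε : ℝ} (ha : 0 < a) (hb : 0 < b) (hε : 0 < ε) :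
    ∃ K : ℝ, 1 ≤ K ∧ K ^ (-a) ≤ ε ∧ K ^ (-b) ≤ ε :=
  ((eventually_ge_atTop 1).and (((tendsto_rpow_neg_atTop ha).eventually_le_const hε).and
    ((tendsto_rpow_neg_atTop hb).eventually_le_const hε))).exists

theorem div_mul_le_one_sub_exp_neg_sub {a t u K : ℝ} (ht : 0 < t) (hK : 0 < K) (hu : 0 < u)
    (hu1 : u ≤ 1) (hKa : K ^ (-a) ≤ 1 / (8 * (1 + t)))
    (hKa' : K ^ (-(1 - a)) ≤ 1 / (8 * (1 + t))) :
    t / (2 * (1 + t)) * u ≤ 1 - exp (-(t * u)) - 2 * (1 - exp (-(t * (u * K ^ (-a))))) -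
      2 / K * (1 - exp (-(t * (u * K ^ a)))) := by
  have hmid : t * u / (1 + t) ≤ 1 - exp (-(t * u)) :=
    calc t * u / (1 + t) ≤ t * u / (1 + t * u) := by
          gcongr
          exact mul_le_of_le_one_right ht.le hu1
      _ ≤ _ := div_one_add_le_one_sub_exp_neg (by positivity)
  have hlarge : 2 * (1 - exp (-(t * (u * K ^ (-a))))) ≤
      2 * (t * u) * (1 / (8 * (1 + t))) :=
    calc _ ≤ 2 * (t * (u * K ^ (-a))) := by
          gcongr
          linarith [one_sub_le_exp_neg (t * (u * K ^ (-a)))]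
      _ = 2 * (t * u) * K ^ (-a) := by ring
      _ ≤ _ := by gcongr
  have hsmall : 2 / K * (1 - exp (-(t * (u * K ^ a)))) ≤
      2 * (t * u) * (1 / (8 * (1 + t))) :=
    calc _ ≤ 2 / K * (t * (u * K ^ a)) := by
          gcongr
          linarith [one_sub_le_exp_neg (t * (u * K ^ a))]
      _ = 2 * (t * u) * K ^ (-(1 - a)) := by
          rw [neg_sub, rpow_sub_one hK.ne']
          ring
      _ ≤ _ := by gcongr
  have hsum : t / (2 * (1 + t)) * u = t * u / (1 + t) - 2 * (t * u) * (1 / (8 * (1 + t))) -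
      2 * (t * u) * (1 / (8 * (1 + t))) := by
    field_simp
    ring
  linarith

namespace IsStableSubordinatorDensity

variable {α : ℝ} {σ : ℝ → ℝ → ℝ} {t : ℝ}

theorem integrable_exp (hσ : IsStableSubordinatorDensity α σ) (ht : 0 < t) {l : ℝ} (hl : 0 ≤ l) :
    IntegrableOn (fun τ => exp (-τ * l) * σ t τ) (Ioi 0) := by
  by_contra h
  have hlaplace := hσ.2.2 t l ht hl
  rw [integral_undef h] at hlaplace
  exact (exp_pos _).ne hlaplace

theorem integrable (hσ : IsStableSubordinatorDensity α σ) (ht : 0 < t) :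
    IntegrableOn (σ t) (Ioi 0) := by
  simpa using hσ.integrable_exp ht le_rfl

theorem integral_eq_one (hσ : IsStableSubordinatorDensity α σ) (hα : α ≠ 0) (ht : 0 < t) :
    ∫ τ in Ioi (0 : ℝ), σ t τ = 1 := by
  simpa [zero_rpow (div_ne_zero hα two_ne_zero)] using hσ.2.2 t 0 ht le_rfl

theorem integrable_one_sub_exp (hσ : IsStableSubordinatorDensity α σ) (ht : 0 < t) {l : ℝ}
    (hl : 0 ≤ l) : IntegrableOn (fun τ => (1 - exp (-τ * l)) * σ t τ) (Ioi 0) := by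
  simp only [sub_mul, one_mul]
  exact (hσ.integrable ht).sub (hσ.integrable_exp ht hl)

theorem integral_one_sub_exp (hσ : IsStableSubordinatorDensity α σ) (hα : α ≠ 0) (ht : 0 < t)
    {l : ℝ} (hl : 0 ≤ l) :
    ∫ τ in Ioi (0 : ℝ), (1 - exp (-τ * l)) * σ t τ = 1 - exp (-(t * l ^ (α / 2))) := by
  simp only [sub_mul, one_mul]
  rw [integral_sub (hσ.integrable ht) (hσ.integrable_exp ht hl), hσ.integral_eq_one hα ht,
    hσ.2.2 t l ht hl, neg_mul]

theorem integrable_prod_rpow_mul_exp (hσ : IsStableSubordinatorDensity α σ) (hα : 0 < α)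
    (ht : 0 < t) {p : ℝ} (hp : 0 < p) :
    Integrable (fun z : ℝ × ℝ => z.2 ^ (p - 1) * (exp (-z.1 * z.2) * σ t z.1))
      ((volume.restrict (Ioi 0)).prod (volume.restrict (Ioi 0))) := by
  have hmeas := hσ.2.1 t ht
  rw [integrable_prod_iff' (Measurable.aestronglyMeasurable (by fun_prop))]
  constructor
  · filter_upwards [ae_restrict_mem measurableSet_Ioi] with l hl
    exact (hσ.integrable_exp ht (le_of_lt hl)).const_mul _
  · have hgamma : IntegrableOn (fun l => l ^ (p - 1) * exp (-t * l ^ (α / 2))) (Ioi 0) :=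
      integrableOn_rpow_mul_exp_neg_mul_rpow (by linarith) (by positivity) ht
    refine hgamma.congr ?_
    filter_upwards [ae_restrict_mem measurableSet_Ioi] with l (hl : 0 < l)
    rw [← hσ.2.2 t l ht hl.le, ← integral_const_mul]
    refine setIntegral_congr_fun measurableSet_Ioi fun τ hτ => ?_
    have := hσ.1 t ht τ hτ
    exact (norm_of_nonneg (by positivity)).symm

-- `τ ^ (-p)` is the Laplace superposition `(Γ p)⁻¹ ∫ l ^ (p - 1) * exp (-τ * l)`.
theorem integrable_rpow_neg (hσ : IsStableSubordinatorDensity α σ) (hα : 0 < α) (ht : 0 < t)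
    {p : ℝ} (hp : 0 < p) : IntegrableOn (fun τ => τ ^ (-p) * σ t τ) (Ioi 0) := by
  refine ((hσ.integrable_prod_rpow_mul_exp hα ht hp).integral_prod_left.const_mul
    (Gamma p)⁻¹).congr ?_
  filter_upwards [ae_restrict_mem measurableSet_Ioi] with τ (hτ : 0 < τ)
  have := (Gamma_pos_of_pos hp).ne'
  simp only [← mul_assoc, neg_mul]
  rw [integral_mul_const, integral_rpow_mul_exp_neg_mul_Ioi hp hτ, one_div, inv_rpow hτ.le,
    ← rpow_neg hτ.le]
  field_simp

theorem rpow_neg_mul_exp_mul_le (hσ : IsStableSubordinatorDensity α σ) (ht : 0 < t) {A τ : ℝ}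
    (p : ℝ) (hA : 0 ≤ A) (hτ : 0 < τ) :
    τ ^ (-p) * exp (-A / (4 * τ)) * σ t τ ≤ τ ^ (-p) * σ t τ := by
  have hexp : exp (-A / (4 * τ)) ≤ 1 :=
    exp_le_one_iff.2 (div_nonpos_of_nonpos_of_nonneg (neg_nonpos.2 hA) (by positivity))
  exact mul_le_mul_of_nonneg_right (mul_le_of_le_one_right (by positivity) hexp)
    (hσ.1 t ht τ hτ)

theorem integrable_rpow_neg_mul_exp (hσ : IsStableSubordinatorDensity α σ) (hα : 0 < α)
    (ht : 0 < t) {p A : ℝ} (hp : 0 < p) (hA : 0 ≤ A) :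
    IntegrableOn (fun τ => τ ^ (-p) * exp (-A / (4 * τ)) * σ t τ) (Ioi 0) := by
  have hmeas := hσ.2.1 t ht
  refine (hσ.integrable_rpow_neg hα ht hp).mono' (Measurable.aestronglyMeasurable (by fun_prop)) ?_
  filter_upwards [ae_restrict_mem measurableSet_Ioi] with τ (hτ : 0 < τ)
  have := hσ.1 t ht τ hτ
  rw [norm_of_nonneg (by positivity)]
  exact hσ.rpow_neg_mul_exp_mul_le ht p hA hτ

theorem exists_integral_rpow_neg_mul_exp_le (hσ : IsStableSubordinatorDensity α σ) (hα : 0 < α)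
    (ht : 0 < t) {p : ℝ} (hp : 0 < p) :
    ∃ C, 0 < C ∧ ∀ A, 0 < A →
      ∫ τ in Ioi (0 : ℝ), τ ^ (-p) * exp (-A / (4 * τ)) * σ t τ ≤ C * A ^ (-(p + α / 2)) := by
  obtain ⟨C, hC, hle⟩ := exists_rpow_neg_mul_exp_le hp.le
  refine ⟨C * t, by positivity, fun A hA => ?_⟩
  have hscaled (τ : ℝ) (hτ : τ ∈ Ioi (0 : ℝ)) : τ ^ (-p) * exp (-A / (4 * τ)) * σ t τ ≤
      A ^ (-p) * C * ((1 - exp (-τ * A⁻¹)) * σ t τ) := by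
    have hτ := mem_Ioi.1 hτ
    have hσ0 := hσ.1 t ht τ hτ
    have hpow : τ ^ (-p) = A ^ (-p) * (τ / A) ^ (-p) := by
      rw [← mul_rpow hA.le (by positivity), mul_div_cancel₀ _ hA.ne']
    have hexp : exp (-A / (4 * τ)) = exp (-1 / (4 * (τ / A))) := by
      congr 1
      field_simp
    rw [hpow, hexp, mul_assoc (A ^ (-p)), mul_assoc (A ^ (-p)), mul_assoc (A ^ (-p)),
      ← mul_assoc C, neg_mul, ← div_eq_mul_inv]
    gcongr A ^ (-p) * (?_ * _)
    exact hle (τ / A) (by positivity)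
  calc ∫ τ in Ioi (0 : ℝ), τ ^ (-p) * exp (-A / (4 * τ)) * σ t τ
      ≤ ∫ τ in Ioi (0 : ℝ), A ^ (-p) * C * ((1 - exp (-τ * A⁻¹)) * σ t τ) :=
        setIntegral_mono_on (hσ.integrable_rpow_neg_mul_exp hα ht hp hA.le)
          ((hσ.integrable_one_sub_exp ht (by positivity)).const_mul _) measurableSet_Ioi hscaled
    _ = A ^ (-p) * C * (1 - exp (-(t * A⁻¹ ^ (α / 2)))) := by
        rw [integral_const_mul, hσ.integral_one_sub_exp hα.ne' ht (by positivity)]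
    _ ≤ A ^ (-p) * C * (t * A⁻¹ ^ (α / 2)) := by
        gcongr
        linarith [one_sub_le_exp_neg (t * A⁻¹ ^ (α / 2))]
    _ = C * t * A ^ (-(p + α / 2)) := by
        rw [neg_add, rpow_add hA, rpow_neg hA.le (α / 2), inv_rpow hA.le]
        ring

theorem isBigO_integral_rpow_neg_mul_exp (hσ : IsStableSubordinatorDensity α σ) (hα : 0 < α)
    (ht : 0 < t) {p : ℝ} (hp : 0 < p) :
    (fun A => ∫ τ in Ioi (0 : ℝ), τ ^ (-p) * exp (-A / (4 * τ)) * σ t τ)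
      =O[𝓟 (Ici 0)] fun A => (1 + A) ^ (-(p + α / 2)) := by
  obtain ⟨C, hC, hle⟩ := hσ.exists_integral_rpow_neg_mul_exp_le hα ht hp
  refine isBigO_principal.2
    ⟨2 ^ (p + α / 2) * ((∫ τ in Ioi (0 : ℝ), τ ^ (-p) * σ t τ) + C), fun A hA => ?_⟩
  have hA := mem_Ici.1 hA
  set I := ∫ τ in Ioi (0 : ℝ), τ ^ (-p) * exp (-A / (4 * τ)) * σ t τ
  have hI : 0 ≤ I := setIntegral_nonneg measurableSet_Ioi fun τ (hτ : 0 < τ) =>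
    mul_nonneg (by positivity) (hσ.1 t ht τ hτ)
  have hsmall : I ≤ ∫ τ in Ioi (0 : ℝ), τ ^ (-p) * σ t τ :=
    setIntegral_mono_on (hσ.integrable_rpow_neg_mul_exp hα ht hp hA)
      (hσ.integrable_rpow_neg hα ht hp) measurableSet_Ioi
      fun τ hτ => hσ.rpow_neg_mul_exp_mul_le ht p hA hτ
  have hlarge : I * A ^ (p + α / 2) ≤ C := by
    rcases hA.eq_or_lt with rfl | hA0
    · rw [zero_rpow (by positivity), mul_zero]
      exact hC.le
    · rw [← le_div_iff₀ (by positivity), div_eq_mul_inv, ← rpow_neg hA]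
      exact hle A hA0
  rw [norm_of_nonneg hI, norm_of_nonneg (by positivity), rpow_neg (by positivity),
    ← div_eq_mul_inv, le_div_iff₀ (by positivity)]
  calc I * (1 + A) ^ (p + α / 2) ≤ I * (2 ^ (p + α / 2) * (1 + A ^ (p + α / 2))) := by
        gcongr
        exact rpow_one_add_le (by positivity) hA
    _ = 2 ^ (p + α / 2) * (I + I * A ^ (p + α / 2)) := by ring
    _ ≤ _ := by gcongr

theorem one_sub_exp_sub_le_setIntegral_Icc (hσ : IsStableSubordinatorDensity α σ) (hα : α ≠ 0)
    (ht : 0 < t) {K R : ℝ} (hK : 0 < K) (hR : 0 < R) :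
    (1 - exp (-(t * R⁻¹ ^ (α / 2)))) - 2 * (1 - exp (-(t * (R⁻¹ / K) ^ (α / 2)))) -
        2 / K * (1 - exp (-(t * (R⁻¹ * K) ^ (α / 2)))) ≤
      ∫ τ in Icc (R / K) (R * K), σ t τ := by
  have hmid := hσ.integrable_one_sub_exp ht (show 0 ≤ R⁻¹ by positivity)
  have hlarge := (hσ.integrable_one_sub_exp ht (show 0 ≤ R⁻¹ / K by positivity)).const_mul 2
  have hsmall :=
    (hσ.integrable_one_sub_exp ht (show 0 ≤ R⁻¹ * K by positivity)).const_mul (2 / K)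
  have hsub : Icc (R / K) (R * K) ⊆ Ioi 0 := fun τ hτ => (by positivity : 0 < R / K).trans_le hτ.1
  have hle (τ : ℝ) (hτ : τ ∈ Ioi (0 : ℝ)) : (1 - exp (-τ * R⁻¹)) * σ t τ -
      2 * ((1 - exp (-τ * (R⁻¹ / K))) * σ t τ) -
        2 / K * ((1 - exp (-τ * (R⁻¹ * K))) * σ t τ) ≤
      (Icc (R / K) (R * K)).indicator (σ t) τ := by
    have hτ := mem_Ioi.1 hτ
    have hσ0 := hσ.1 t ht τ hτ
    have hx : τ / R ∈ Icc K⁻¹ K ↔ τ ∈ Icc (R / K) (R * K) := by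
      rw [mem_Icc, mem_Icc, le_div_iff₀ hR, div_le_iff₀ hR, inv_mul_eq_div, mul_comm K]
    have h := mul_le_mul_of_nonneg_right
      (one_sub_exp_sub_le_indicator hK (show 0 ≤ τ / R by positivity)) hσ0
    calc _ = _ := by
          simp only [div_eq_mul_inv, neg_mul, mul_assoc]
          ring
      _ ≤ _ := h
      _ = _ := by simp [indicator_apply, hx]
  have hint := setIntegral_mono_on ((hmid.sub hlarge).sub hsmall)
    ((hσ.integrable ht).indicator measurableSet_Icc) measurableSet_Ioi hle
  rwa [setIntegral_indicator measurableSet_Icc, inter_eq_self_of_subset_right hsub,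
    integral_sub' (hmid.sub hlarge) hsmall, integral_sub' hmid hlarge, integral_const_mul,
    integral_const_mul, hσ.integral_one_sub_exp hα ht (by positivity),
    hσ.integral_one_sub_exp hα ht (by positivity),
    hσ.integral_one_sub_exp hα ht (by positivity)] at hint

theorem exists_le_setIntegral_Icc (hσ : IsStableSubordinatorDensity α σ) (hα0 : 0 < α)
    (hα2 : α < 2) (ht : 0 < t) :
    ∃ c K, 0 < c ∧ 1 ≤ K ∧ ∀ R, 1 ≤ R →
      c * R ^ (-(α / 2)) ≤ ∫ τ in Icc (R / K) (R * K), σ t τ := by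
  obtain ⟨K, hK, hKα, hKα'⟩ := exists_one_le_rpow_neg_le (show 0 < α / 2 by positivity)
    (show 0 < 1 - α / 2 by linarith) (show 0 < 1 / (8 * (1 + t)) by positivity)
  refine ⟨t / (2 * (1 + t)), K, by positivity, hK, fun R hR => ?_⟩
  have hR0 : 0 < R := by positivity
  have hK0 : 0 < K := by positivity
  refine le_trans ?_ (hσ.one_sub_exp_sub_le_setIntegral_Icc hα0.ne' ht hK0 hR0)
  rw [div_rpow (by positivity) hK0.le, mul_rpow (by positivity) hK0.le, inv_rpow hR0.le,
    ← rpow_neg hR0.le, div_eq_mul_inv (R ^ _), ← rpow_neg hK0.le]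
  set u := R ^ (-(α / 2))
  exact div_mul_le_one_sub_exp_neg_sub ht hK0 (by positivity)
    (rpow_le_one_of_one_le_of_nonpos hR (by linarith)) hKα hKα'

end IsStableSubordinatorDensity

/-! ### The subordinated kernel -/

theorem rpow_le_add_rpow_of_mem_uIcc {a b x : ℝ} (q : ℝ) (ha : 0 < a) (hb : 0 < b)
    (hx : x ∈ uIcc a b) : x ^ q ≤ a ^ q + b ^ q := by
  rcases mem_uIcc.1 hx with ⟨hax, hxb⟩ | ⟨hbx, hxa⟩ <;> rcases le_total 0 q with hq | hq
  · exact le_add_of_nonneg_of_le (by positivity) (rpow_le_rpow (by linarith) hxb hq)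
  · exact le_add_of_le_of_nonneg (rpow_le_rpow_of_nonpos ha hax hq) (by positivity)
  · exact le_add_of_le_of_nonneg (rpow_le_rpow (by linarith) hxa hq) (by positivity)
  · exact le_add_of_nonneg_of_le (by positivity) (rpow_le_rpow_of_nonpos hb hbx hq)

theorem rpow_neg_abs_mul_rpow_le {K a x : ℝ} (q : ℝ) (hK : 0 < K) (ha : 0 < a)
    (hx : x ∈ Icc (a / K) (a * K)) : K ^ (-|q|) * a ^ q ≤ x ^ q := by
  have hx0 : 0 < x := (by positivity : 0 < a / K).trans_le hx.1
  rcases le_total 0 q with hq | hq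
  · rw [abs_of_nonneg hq, rpow_neg hK.le, inv_mul_eq_div, ← div_rpow ha.le hK.le]
    exact rpow_le_rpow (by positivity) hx.1 hq
  · rw [abs_of_nonpos hq, neg_neg, ← mul_rpow hK.le ha.le, mul_comm]
    exact rpow_le_rpow_of_nonpos hx0 hx.2 hq

section heatProfile

variable {ζ A X τ : ℝ}

theorem heatProfile_nonneg (ζ A : ℝ) (hX : 0 ≤ X) (hτ : 0 ≤ τ) : 0 ≤ heatProfile ζ A X τ := by
  unfold heatProfile
  positivity

theorem measurable_heatProfile (ζ A X : ℝ) : Measurable (heatProfile ζ A X) := by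
  unfold heatProfile
  fun_prop

-- `2 * τ + X` lies between `2 * R + X` and `(2 * R + X) * (τ / R)`.
theorem heatProfile_le {R : ℝ} (ζ A : ℝ) (hX : 0 ≤ X) (hR : 0 < R) (hτ : 0 < τ) :
    heatProfile ζ A X τ ≤ (2 * R + X) ^ (-ζ) *
      (τ ^ (-(1 / 2) : ℝ) * exp (-A / (4 * τ)) +
        R ^ ζ * (τ ^ (-(1 / 2 + ζ)) * exp (-A / (4 * τ)))) := by
  have hscaled : (2 * R + X) * (τ / R) = 2 * τ + X * (τ / R) := by field_simp
  have hmem : 2 * τ + X ∈ uIcc (2 * R + X) ((2 * R + X) * (τ / R)) := by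
    rw [hscaled, mem_uIcc]
    rcases le_total R τ with h | h
    · exact Or.inl ⟨by linarith, by
        linarith [le_mul_of_one_le_right hX ((one_le_div hR).2 h)]⟩
    · exact Or.inr ⟨by linarith [mul_le_of_le_one_right hX ((div_le_one hR).2 h)], by linarith⟩
  have hpow := rpow_le_add_rpow_of_mem_uIcc (-ζ) (by positivity) (by positivity) hmem
  rw [mul_rpow (by positivity) (by positivity), div_rpow hτ.le hR.le, rpow_neg hR.le,
    div_inv_eq_mul] at hpow
  calc heatProfile ζ A X τ
      ≤ τ ^ (-(1 / 2) : ℝ) * ((2 * R + X) ^ (-ζ) + (2 * R + X) ^ (-ζ) * (τ ^ (-ζ) * R ^ ζ)) *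
          exp (-A / (4 * τ)) := by
        unfold heatProfile
        gcongr
    _ = _ := by
        rw [neg_add, rpow_add hτ]
        ring

theorem le_heatProfile {K : ℝ} (ζ : ℝ) (hA : 0 ≤ A) (hX : 0 ≤ X) (hK : 1 ≤ K)
    (hτ : τ ∈ Icc ((1 + A) / K) ((1 + A) * K)) :
    K ^ (-(1 / 2) : ℝ) * K ^ (-|-ζ|) * exp (-K / 4) *
      ((1 + A) ^ (-(1 / 2) : ℝ) * (2 * (1 + A) + X) ^ (-ζ)) ≤ heatProfile ζ A X τ := by
  have hK0 : 0 < K := by positivity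
  have hτ0 : 0 < τ := (by positivity : 0 < (1 + A) / K).trans_le hτ.1
  have hle : 1 + A ≤ τ * K := (div_le_iff₀ hK0).1 hτ.1
  have hmem : 2 * τ + X ∈ Icc ((2 * (1 + A) + X) / K) ((2 * (1 + A) + X) * K) := by
    have hXK := le_mul_of_one_le_right hX hK
    rw [mem_Icc, div_le_iff₀ hK0]
    constructor <;> linarith [hτ.2]
  have htime : K ^ (-(1 / 2) : ℝ) * (1 + A) ^ (-(1 / 2) : ℝ) ≤ τ ^ (-(1 / 2) : ℝ) := by
    rw [← mul_rpow hK0.le (by positivity), mul_comm]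
    exact rpow_le_rpow_of_nonpos hτ0 hτ.2 (by norm_num)
  have hexp : exp (-K / 4) ≤ exp (-A / (4 * τ)) := by
    rw [exp_le_exp, div_le_div_iff₀ four_pos (by positivity)]
    linarith
  calc _ = K ^ (-(1 / 2) : ℝ) * (1 + A) ^ (-(1 / 2) : ℝ) *
        (K ^ (-|-ζ|) * (2 * (1 + A) + X) ^ (-ζ)) * exp (-K / 4) := by ring
    _ ≤ _ := by
        unfold heatProfile
        gcongr
        exact rpow_neg_abs_mul_rpow_le _ hK0 (by positivity) hmem

end heatProfile

section subKernel

variable {ζ α t : ℝ} {σ : ℝ → ℝ → ℝ}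

theorem subKernel_nonneg (hζ : -1 / 2 ≤ ζ) (hσ : IsStableSubordinatorDensity α σ) (ht : 0 < t)
    {r s : ℝ} (hr : 0 ≤ r) (hs : 0 ≤ s) : 0 ≤ subKernel ζ σ t r s :=
  setIntegral_nonneg measurableSet_Ioi fun τ hτ =>
    mul_nonneg (besselHeat_nonneg hζ hr hs (le_of_lt hτ)) (hσ.1 t ht τ hτ)

theorem integrable_rpow_add_rpow_mul_exp (hζ : -1 / 2 < ζ)
    (hσ : IsStableSubordinatorDensity α σ) (hα : 0 < α) (ht : 0 < t) {A : ℝ} (hA : 0 ≤ A)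
    (M N : ℝ) : IntegrableOn (fun τ => M * (τ ^ (-(1 / 2) : ℝ) * exp (-A / (4 * τ)) * σ t τ +
      N * (τ ^ (-(1 / 2 + ζ)) * exp (-A / (4 * τ)) * σ t τ))) (Ioi 0) :=
  ((hσ.integrable_rpow_neg_mul_exp hα ht one_half_pos hA).add
    ((hσ.integrable_rpow_neg_mul_exp hα ht (by linarith) hA).const_mul N)).const_mul M

theorem heatProfile_mul_le (hσ : IsStableSubordinatorDensity α σ) (ht : 0 < t) {R X τ : ℝ}
    (ζ A : ℝ) (hX : 0 ≤ X) (hR : 0 < R) (hτ : 0 < τ) :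
    heatProfile ζ A X τ * σ t τ ≤ (2 * R + X) ^ (-ζ) *
      (τ ^ (-(1 / 2) : ℝ) * exp (-A / (4 * τ)) * σ t τ +
        R ^ ζ * (τ ^ (-(1 / 2 + ζ)) * exp (-A / (4 * τ)) * σ t τ)) :=
  (mul_le_mul_of_nonneg_right (heatProfile_le ζ A hX hR hτ) (hσ.1 t ht τ hτ)).trans_eq (by ring)

theorem integrable_heatProfile_mul (hζ : -1 / 2 < ζ) (hσ : IsStableSubordinatorDensity α σ)
    (hα : 0 < α) (ht : 0 < t) {A X : ℝ} (hA : 0 ≤ A) (hX : 0 ≤ X) :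
    IntegrableOn (fun τ => heatProfile ζ A X τ * σ t τ) (Ioi 0) := by
  refine (integrable_rpow_add_rpow_mul_exp hζ hσ hα ht hA ((2 * 1 + X) ^ (-ζ)) (1 ^ ζ)).mono'
    ((measurable_heatProfile ζ A X).mul (hσ.2.1 t ht)).aestronglyMeasurable ?_
  filter_upwards [ae_restrict_mem measurableSet_Ioi] with τ hτ
  rw [norm_of_nonneg (mul_nonneg (heatProfile_nonneg ζ A hX (le_of_lt hτ)) (hσ.1 t ht τ hτ))]
  exact heatProfile_mul_le hσ ht ζ A hX one_pos hτ

theorem isBigO_integral_heatProfile_mul (hζ : -1 / 2 < ζ)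
    (hσ : IsStableSubordinatorDensity α σ) (hα : 0 < α) (ht : 0 < t) :
    (fun p : ℝ × ℝ => ∫ τ in Ioi (0 : ℝ), heatProfile ζ p.1 p.2 τ * σ t τ)
      =O[𝓟 (Ici 0 ×ˢ Ici 0)]
        fun p => (1 + p.1) ^ (-(1 / 2 + α / 2)) * (2 * (1 + p.1) + p.2) ^ (-ζ) := by
  let J (p A : ℝ) := ∫ τ in Ioi (0 : ℝ), τ ^ (-p) * exp (-A / (4 * τ)) * σ t τ
  have hle : (fun p : ℝ × ℝ => ∫ τ in Ioi (0 : ℝ), heatProfile ζ p.1 p.2 τ * σ t τ)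
      =O[𝓟 (Ici 0 ×ˢ Ici 0)] fun p => (2 * (1 + p.1) + p.2) ^ (-ζ) *
        (J (1 / 2) p.1 + (1 + p.1) ^ ζ * J (1 / 2 + ζ) p.1) := by
    refine isBigO_principal.2 ⟨1, fun ⟨A, X⟩ ⟨hA, hX⟩ => ?_⟩
    have hA := mem_Ici.1 hA
    have hX := mem_Ici.1 hX
    have hmono := setIntegral_mono_on (integrable_heatProfile_mul hζ hσ hα ht hA hX)
      (integrable_rpow_add_rpow_mul_exp hζ hσ hα ht hA _ _) measurableSet_Ioi
      fun τ hτ => heatProfile_mul_le hσ ht ζ A hX (show 0 < 1 + A by positivity) hτ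
    rw [integral_const_mul, integral_add
      (hσ.integrable_rpow_neg_mul_exp hα ht one_half_pos hA)
      ((hσ.integrable_rpow_neg_mul_exp hα ht (by linarith) hA).const_mul _),
      integral_const_mul] at hmono
    rw [one_mul, norm_of_nonneg (setIntegral_nonneg measurableSet_Ioi fun τ hτ =>
      mul_nonneg (heatProfile_nonneg ζ A hX (le_of_lt hτ)) (hσ.1 t ht τ hτ))]
    exact hmono.trans (le_norm_self _)
  have hfst : Tendsto Prod.fst (𝓟 (Ici (0 : ℝ) ×ˢ Ici (0 : ℝ))) (𝓟 (Ici 0)) :=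
    tendsto_principal_principal.2 fun p hp => hp.1
  have hJ := (hσ.isBigO_integral_rpow_neg_mul_exp hα ht one_half_pos).comp_tendsto hfst
  have hJζ := (hσ.isBigO_integral_rpow_neg_mul_exp hα ht
    (show 0 < 1 / 2 + ζ by linarith)).comp_tendsto hfst
  have hJζ' : (fun p : ℝ × ℝ => (1 + p.1) ^ ζ * J (1 / 2 + ζ) p.1) =O[𝓟 (Ici 0 ×ˢ Ici 0)]
      fun p => (1 + p.1) ^ (-(1 / 2 + α / 2)) :=
    ((isBigO_refl _ _).mul hJζ).trans_eventuallyEq (eventually_principal.2 fun p hp => by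
      have := mem_Ici.1 hp.1
      dsimp only [Function.comp_apply]
      rw [← rpow_add (by positivity)]
      ring_nf)
  exact (hle.trans ((isBigO_refl _ _).mul (hJ.add hJζ'))).congr_right fun p => mul_comm _ _

theorem rpow_mul_rpow_isBigO_integral_heatProfile_mul (hζ : -1 / 2 < ζ)
    (hσ : IsStableSubordinatorDensity α σ) (hα0 : 0 < α) (hα2 : α < 2) (ht : 0 < t) :
    (fun p : ℝ × ℝ => (1 + p.1) ^ (-(1 / 2 + α / 2)) * (2 * (1 + p.1) + p.2) ^ (-ζ))
      =O[𝓟 (Ici 0 ×ˢ Ici 0)]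
        fun p => ∫ τ in Ioi (0 : ℝ), heatProfile ζ p.1 p.2 τ * σ t τ := by
  obtain ⟨c, K, hc, hK, hmass⟩ := hσ.exists_le_setIntegral_Icc hα0 hα2 ht
  have : 0 < K := by positivity
  set k := K ^ (-(1 / 2) : ℝ) * K ^ (-|-ζ|) * exp (-K / 4)
  have : 0 < k := by positivity
  refine isBigO_principal.2 ⟨(k * c)⁻¹, fun ⟨A, X⟩ ⟨hA, hX⟩ => ?_⟩
  have hA : 0 ≤ A := hA
  have hX : 0 ≤ X := hX
  have hint := integrable_heatProfile_mul hζ hσ hα0 ht hA hX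
  have hnonneg (τ : ℝ) (hτ : τ ∈ Ioi (0 : ℝ)) : 0 ≤ heatProfile ζ A X τ * σ t τ :=
    mul_nonneg (heatProfile_nonneg ζ A hX (le_of_lt hτ)) (hσ.1 t ht τ hτ)
  have hsub : Icc ((1 + A) / K) ((1 + A) * K) ⊆ Ioi 0 :=
    fun τ hτ => (by positivity : 0 < (1 + A) / K).trans_le hτ.1
  set D := (1 + A) ^ (-(1 / 2) : ℝ) * (2 * (1 + A) + X) ^ (-ζ)
  rw [norm_of_nonneg (by positivity), norm_of_nonneg (setIntegral_nonneg measurableSet_Ioi hnonneg),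
    le_inv_mul_iff₀ (by positivity)]
  calc k * c * ((1 + A) ^ (-(1 / 2 + α / 2)) * (2 * (1 + A) + X) ^ (-ζ))
      = k * D * (c * (1 + A) ^ (-(α / 2))) := by
        rw [neg_add, rpow_add (by positivity)]
        ring
    _ ≤ k * D * ∫ τ in Icc ((1 + A) / K) ((1 + A) * K), σ t τ := by
        gcongr
        exact hmass _ (le_add_of_nonneg_right hA)
    _ = ∫ τ in Icc ((1 + A) / K) ((1 + A) * K), k * D * σ t τ := (integral_const_mul _ _).symm
    _ ≤ ∫ τ in Icc ((1 + A) / K) ((1 + A) * K), heatProfile ζ A X τ * σ t τ :=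
        setIntegral_mono_on (((hσ.integrable ht).mono_set hsub).const_mul _)
          (hint.mono_set hsub) measurableSet_Icc fun τ hτ =>
          mul_le_mul_of_nonneg_right (le_heatProfile ζ hA hX hK hτ) (hσ.1 t ht τ (hsub hτ))
    _ ≤ _ := setIntegral_mono_set hint (ae_restrict_of_forall_mem measurableSet_Ioi hnonneg)
        (.of_forall hsub)

theorem isTheta_subKernel (hζ : -1 / 2 < ζ) (hσ : IsStableSubordinatorDensity α σ)
    (hα0 : 0 < α) (hα2 : α < 2) (ht : 0 < t) :
    (fun p : ℝ × ℝ => subKernel ζ σ t p.1 p.2) =Θ[𝓟 (Ioi 0 ×ˢ Ioi 0)]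
      fun p => (1 + (p.1 - p.2) ^ 2) ^ (-(1 / 2 + α / 2)) *
        (2 * (1 + (p.1 - p.2) ^ 2) + p.1 * p.2) ^ (-ζ) := by
  have hmul (p : ℝ × ℝ) (hp : p ∈ Ioi (0 : ℝ) ×ˢ Ioi (0 : ℝ)) : 0 ≤ p.1 * p.2 :=
    (mul_pos (mem_Ioi.1 hp.1) (mem_Ioi.1 hp.2)).le
  have hmaps : Tendsto (fun p : ℝ × ℝ => ((p.1 - p.2) ^ 2, p.1 * p.2)) (𝓟 (Ioi 0 ×ˢ Ioi 0))
      (𝓟 (Ici 0 ×ˢ Ici 0)) :=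
    tendsto_principal_principal.2 fun p hp => ⟨sq_nonneg (p.1 - p.2), hmul p hp⟩
  have hprofile := isTheta_comp_tendsto ⟨isBigO_integral_heatProfile_mul hζ hσ hα0 ht,
    rpow_mul_rpow_isBigO_integral_heatProfile_mul hζ hσ hα0 hα2 ht⟩ hmaps
  calc (fun p : ℝ × ℝ => subKernel ζ σ t p.1 p.2)
      =Θ[𝓟 (Ioi 0 ×ˢ Ioi 0)] fun p =>
        ∫ τ in Ioi (0 : ℝ), heatProfile ζ ((p.1 - p.2) ^ 2) (p.1 * p.2) τ * σ t τ := by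
        refine isTheta_setIntegral ((isTheta_besselHeat hζ).mul isTheta_rfl) measurableSet_Ioi
          (fun p hp τ hτ => ?_) (fun p hp τ hτ => ?_) (fun p _ => ?_) (fun p hp => ?_)
        · exact mul_nonneg (besselHeat_nonneg hζ.le (le_of_lt hp.1) (le_of_lt hp.2) (le_of_lt hτ))
            (hσ.1 t ht τ hτ)
        · exact mul_nonneg (heatProfile_nonneg _ _ (hmul p hp) (le_of_lt hτ)) (hσ.1 t ht τ hτ)
        · exact ((measurable_besselHeat ζ _ _).mul (hσ.2.1 t ht)).aestronglyMeasurable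
        · exact integrable_heatProfile_mul hζ hσ hα0 ht (sq_nonneg _) (hmul p hp)
    _ =Θ[𝓟 (Ioi 0 ×ˢ Ioi 0)] _ := hprofile

end subKernel

/-! ### The sharp denominator -/

theorem isTheta_one_add_sq : (fun x : ℝ => 1 + x ^ 2) =Θ[⊤] fun x => (1 + |x|) ^ 2 := by
  rw [← principal_univ, isTheta_principal_iff_of_nonneg (fun _ _ => by positivity)
    (fun _ _ => by positivity)]
  refine ⟨1 / 2, 1, by norm_num, one_pos, fun x _ => ?_⟩
  rw [← sq_abs x]
  constructor <;> nlinarith [sq_nonneg (|x| - 1), abs_nonneg x]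

theorem isTheta_two_mul_one_add_sub_sq_add_mul :
    (fun p : ℝ × ℝ => 2 * (1 + (p.1 - p.2) ^ 2) + p.1 * p.2) =Θ[𝓟 (Ioi 0 ×ˢ Ioi 0)]
      fun p => (1 + (p.1 + p.2)) ^ 2 := by
  rw [isTheta_principal_iff_of_nonneg]
  · refine ⟨1 / 8, 2, by norm_num, two_pos, fun ⟨r, s⟩ ⟨hr, hs⟩ => ?_⟩
    have hr : 0 < r := hr
    have hs : 0 < s := hs
    constructor <;> nlinarith [sq_nonneg (r + s - 1), sq_nonneg (r - s), mul_pos hr hs]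
  all_goals
    intro p hp
    have := mem_Ioi.1 hp.1
    have := mem_Ioi.1 hp.2
    positivity

theorem rpow_mul_rpow_le_one_add {a b q S : ℝ} (hb : 0 ≤ b) (hbq : 0 ≤ b + q) (ha : 0 ≤ a)
    (haS : a ≤ S) (hS : 0 < S) : a ^ b * S ^ q ≤ (1 + a) ^ b * (1 + S) ^ q := by
  have hfrac : a / (1 + a) ≤ S / (1 + S) := by
    rw [div_le_div_iff₀ (by positivity) (by positivity)]
    linarith
  have hfrac1 : S / (1 + S) ≤ 1 := (div_le_one (by positivity)).2 (by linarith)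
  have hle : (a / (1 + a)) ^ b * (S / (1 + S)) ^ q ≤ 1 :=
    calc (a / (1 + a)) ^ b * (S / (1 + S)) ^ q ≤ (S / (1 + S)) ^ b * (S / (1 + S)) ^ q := by gcongr
      _ = (S / (1 + S)) ^ (b + q) := (rpow_add (by positivity) _ _).symm
      _ ≤ 1 := rpow_le_one (by positivity) hfrac1 hbq
  rwa [div_rpow ha (by positivity), div_rpow hS.le (by positivity), div_mul_div_comm,
    div_le_one (by positivity)] at hle

theorem one_add_rpow_mul_one_add_rpow_le {a b S : ℝ} (q : ℝ) (hb : 0 ≤ b) (ha : 0 ≤ a)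
    (haS : a ≤ S) :
    (1 + a) ^ b * (1 + S) ^ q ≤ 2 ^ b * 2 ^ |q| * (a ^ b * S ^ q + (1 + S) ^ q) := by
  have hS : 0 ≤ S := ha.trans haS
  have htwo : (1 : ℝ) ≤ 2 ^ |q| := one_le_rpow one_le_two (abs_nonneg q)
  rcases le_total a 1 with h | h
  · calc (1 + a) ^ b * (1 + S) ^ q ≤ 2 ^ b * (1 + S) ^ q := by
          gcongr
          linarith
      _ = 2 ^ b * 1 * (0 + (1 + S) ^ q) := by ring
      _ ≤ _ := by
          gcongr
          positivity
  · have hmem : S ∈ Icc ((1 + S) / 2) ((1 + S) * 2) := ⟨by linarith, by linarith⟩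
    have hpow := rpow_neg_abs_mul_rpow_le q two_pos (by positivity) hmem
    rw [rpow_neg zero_le_two, inv_mul_le_iff₀ (by positivity)] at hpow
    calc (1 + a) ^ b * (1 + S) ^ q ≤ (2 * a) ^ b * (2 ^ |q| * S ^ q) := by
          gcongr
          linarith
      _ = 2 ^ b * 2 ^ |q| * (a ^ b * S ^ q + 0) := by
          rw [mul_rpow zero_le_two ha]
          ring
      _ ≤ _ := by
          gcongr
          positivity

theorem isTheta_rpow_mul_rpow_add_rpow {b q : ℝ} (hb : 0 ≤ b) (hbq : 0 ≤ b + q) :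
    (fun p : ℝ × ℝ => p.1 ^ b * p.2 ^ q + (1 + p.2) ^ q)
      =Θ[𝓟 {p | 0 ≤ p.1 ∧ p.1 ≤ p.2 ∧ 0 < p.2}] fun p => (1 + p.1) ^ b * (1 + p.2) ^ q := by
  rw [isTheta_principal_iff_of_nonneg]
  · refine ⟨(2 ^ b * 2 ^ |q|)⁻¹, 2, by positivity, two_pos, fun ⟨a, S⟩ ⟨ha, haS, hS⟩ => ⟨?_, ?_⟩⟩
    · exact (inv_mul_le_iff₀ (by positivity)).2 (one_add_rpow_mul_one_add_rpow_le q hb ha haS)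
    · rw [two_mul]
      refine add_le_add (rpow_mul_rpow_le_one_add hb hbq ha haS hS) (le_mul_of_one_le_left ?_ ?_)
      · exact rpow_nonneg (add_nonneg zero_le_one hS.le) q
      · exact one_le_rpow (le_add_of_nonneg_right ha) hb
  all_goals
    rintro p ⟨ha, -, hS⟩
    positivity

theorem isTheta_inv_denominator {α ζ : ℝ} (hα : 0 ≤ 1 + α) (hζ : 0 ≤ 1 + α + 2 * ζ) :
    (fun p : ℝ × ℝ => (1 + (p.1 - p.2) ^ 2) ^ (-(1 / 2 + α / 2)) *
        (2 * (1 + (p.1 - p.2) ^ 2) + p.1 * p.2) ^ (-ζ)) =Θ[𝓟 (Ioi 0 ×ˢ Ioi 0)]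
      fun p => (|p.1 - p.2| ^ (1 + α) * (p.1 + p.2) ^ (2 * ζ) +
        (1 + p.1 + p.2) ^ (2 * ζ))⁻¹ := by
  have hmaps : Tendsto (fun p : ℝ × ℝ => (|p.1 - p.2|, p.1 + p.2)) (𝓟 (Ioi 0 ×ˢ Ioi 0))
      (𝓟 {p | 0 ≤ p.1 ∧ p.1 ≤ p.2 ∧ 0 < p.2}) :=
    tendsto_principal_principal.2 fun ⟨r, s⟩ ⟨(hr : 0 < r), (hs : 0 < s)⟩ =>
      ⟨abs_nonneg _, abs_le.2 ⟨by linarith, by linarith⟩, add_pos hr hs⟩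
  have hdist : (fun p : ℝ × ℝ => 1 + (p.1 - p.2) ^ 2) =Θ[𝓟 (Ioi 0 ×ˢ Ioi 0)]
      fun p => (1 + |p.1 - p.2|) ^ 2 :=
    isTheta_comp_tendsto isTheta_one_add_sq tendsto_top
  calc (fun p : ℝ × ℝ => (1 + (p.1 - p.2) ^ 2) ^ (-(1 / 2 + α / 2)) *
        (2 * (1 + (p.1 - p.2) ^ 2) + p.1 * p.2) ^ (-ζ))
      =Θ[𝓟 (Ioi 0 ×ˢ Ioi 0)] fun p => ((1 + |p.1 - p.2|) ^ 2) ^ (-(1 / 2 + α / 2)) *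
        ((1 + (p.1 + p.2)) ^ 2) ^ (-ζ) :=
        (hdist.rpow (.of_forall fun p => by positivity) (.of_forall fun p => by positivity)).mul
          (isTheta_two_mul_one_add_sub_sq_add_mul.rpow (eventually_principal.2 fun p hp => by
            have := mem_Ioi.1 hp.1
            have := mem_Ioi.1 hp.2
            positivity) (.of_forall fun p => by positivity))
    _ =ᶠ[𝓟 (Ioi 0 ×ˢ Ioi 0)] fun p =>
        ((1 + |p.1 - p.2|) ^ (1 + α) * (1 + (p.1 + p.2)) ^ (2 * ζ))⁻¹ :=
        eventually_principal.2 fun p hp => by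
          have := mem_Ioi.1 hp.1
          have := mem_Ioi.1 hp.2
          dsimp only
          rw [mul_inv, ← rpow_neg (by positivity), ← rpow_neg (by positivity),
            ← rpow_natCast_mul (by positivity), ← rpow_natCast_mul (by positivity)]
          congr 2 <;> push_cast <;> ring
    _ =Θ[𝓟 (Ioi 0 ×ˢ Ioi 0)] fun p =>
        (|p.1 - p.2| ^ (1 + α) * (p.1 + p.2) ^ (2 * ζ) + (1 + (p.1 + p.2)) ^ (2 * ζ))⁻¹ :=
        (isTheta_comp_tendsto (isTheta_rpow_mul_rpow_add_rpow hα hζ).symm hmaps).inv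
    _ = _ := by simp only [add_assoc]

theorem stmt3 (ζ α : ℝ) (hζ : -1/2 < ζ) (hα0 : 0 < α) (hα2 : α < 2)
    (σ : ℝ → ℝ → ℝ) (hσ : IsStableSubordinatorDensity α σ) :
    ∃ c C : ℝ, 0 < c ∧ 0 < C ∧
      ∀ r s : ℝ, 0 < r → 0 < s →
        c / (|r - s| ^ (1 + α) * (r + s) ^ (2 * ζ) + (1 + r + s) ^ (2 * ζ))
            ≤ subKernel ζ σ 1 r s ∧
          subKernel ζ σ 1 r s
            ≤ C / (|r - s| ^ (1 + α) * (r + s) ^ (2 * ζ) + (1 + r + s) ^ (2 * ζ)) := by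
  have hbounds := (isTheta_subKernel hζ hσ hα0 hα2 one_pos).trans
    (isTheta_inv_denominator (α := α) (ζ := ζ) (by linarith) (by linarith))
  rw [isTheta_principal_iff_of_nonneg] at hbounds
  · obtain ⟨c, C, hc, hC, hle⟩ := hbounds
    exact ⟨c, C, hc, hC, fun r s hr hs => by simpa only [div_eq_mul_inv] using hle (r, s) ⟨hr, hs⟩⟩
  · exact fun p hp => subKernel_nonneg hζ.le hσ one_pos (le_of_lt hp.1) (le_of_lt hp.2)
  · intro p hp
    have := mem_Ioi.1 hp.1
    have := mem_Ioi.1 hp.2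
    positivity
end

section
/- For all r, s, t > 0 one has the explicit identity p_1^{(1)}(t,r,s) = (4/π) · t / ((r²-s²)² + t²(t² + 2r² + 2s²)). -/
open MeasureTheory Real Set Filter

/-- The `1/2`-stable (Lévy) subordinator density. -/
noncomputable def levyDensity (t τ : ℝ) : ℝ :=
  1 / (2 * Real.sqrt π) * t / τ ^ ((3 : ℝ) / 2) * Real.exp (-t ^ 2 / (4 * τ))

/-- The `1/2`-subordinated Bessel heat kernel `p_ζ^{(1)}(t,r,s)`. -/
noncomputable def subKernel1 (ζ t r s : ℝ) : ℝ :=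
  ∫ τ in Ioi (0 : ℝ), besselHeat ζ τ r s * levyDensity t τ

/-!
By Legendre's duplication formula `I_{1/2}(x) = √(2 / (πx)) sinh x`, so for `ζ = 1` the Bessel heat
kernel is `1 / (rs)` times the difference of the heat kernels of the line at `r - s` and `r + s`
(up to a constant, the radial part of the heat kernel of `ℝ³`). Subordination turns each Gaussian
into a Cauchy density, by the substitution `τ ↦ 1 / τ` in Euler's integral for `Γ(1)`, and the
difference of the two Cauchy densities is the stated rational function.
-/

theorem factorial_mul_Gamma_add_three_halves (k : ℕ) :
    (k.factorial : ℝ) * Gamma (k + 3 / 2) = (2 * k + 1).factorial * √π / 2 ^ (2 * k + 1) := by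
  have duplication := Gamma_mul_Gamma_add_half ((k : ℝ) + 1)
  have arg_half : (k : ℝ) + 1 + 1 / 2 = k + 3 / 2 := by ring
  have arg_double : 2 * ((k : ℝ) + 1) = (2 * k + 1 : ℕ) + 1 := by push_cast; ring
  have exponent : 1 - (((2 * k + 1 : ℕ) : ℝ) + 1) = -((2 * k + 1 : ℕ) : ℝ) := by ring
  rw [arg_half, arg_double, exponent, Gamma_nat_eq_factorial, Gamma_nat_eq_factorial,
    rpow_neg zero_le_two, rpow_natCast] at duplication
  rw [duplication]
  ring

theorem besselI_one_half {x : ℝ} (hx : 0 < x) :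
    besselI (1 / 2) x = √(2 / (π * x)) * sinh x := by
  have hasSum_coeff := (hasSum_sinh x).mul_left √(2 / (π * x))
  rw [besselI, ← hasSum_coeff.tsum_eq]
  refine tsum_congr fun k => ?_
  have power : (x / 2) ^ (2 * (k : ℝ) + 1 / 2) = (x / 2) ^ (2 * k) * √(x / 2) := by
    rw [rpow_add (by positivity), ← sqrt_eq_rpow, ← rpow_natCast, Nat.cast_mul, Nat.cast_ofNat]
  have prefactor : √(2 / (π * x)) = 2 * √(x / 2) / (√π * x) := by
    rw [sqrt_eq_iff_mul_self_eq_of_pos (by positivity), div_mul_div_comm, mul_mul_mul_comm,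
      mul_mul_mul_comm √π, mul_self_sqrt (by positivity), mul_self_sqrt pi_pos.le]
    field_simp
  have gamma_arg : (k : ℝ) + 1 / 2 + 1 = k + 3 / 2 := by ring
  rw [power, gamma_arg, factorial_mul_Gamma_add_three_halves, prefactor, div_pow]
  field_simp
  ring

/-- The heat kernel `(4πτ)^{-1/2} exp(-u² / (4τ))` of the real line at time `τ` and displacement
`u`, normalized for the generator `d²/du²` as in `besselHeat`; it is meant for `0 < τ` only. -/
noncomputable def heatKernel (τ u : ℝ) : ℝ :=
  exp (-u ^ 2 / (4 * τ)) / √(4 * π * τ)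

theorem besselHeat_one {τ r s : ℝ} (hτ : 0 < τ) (hrs : 0 < r * s) :
    besselHeat 1 τ r s = (heatKernel τ (r - s) - heatKernel τ (r + s)) / (r * s) := by
  have gaussian_sub : exp (-(r - s) ^ 2 / (4 * τ)) =
      exp (-(r ^ 2 + s ^ 2) / (4 * τ)) * exp (r * s / (2 * τ)) := by
    rw [← exp_add]
    congr 1
    field_simp
    ring
  have gaussian_add : exp (-(r + s) ^ 2 / (4 * τ)) =
      exp (-(r ^ 2 + s ^ 2) / (4 * τ)) * exp (-(r * s / (2 * τ))) := by
    rw [← exp_add]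
    congr 1
    field_simp
    ring
  have hr : r ≠ 0 := left_ne_zero_of_mul hrs.ne'
  have hs : s ≠ 0 := right_ne_zero_of_mul hrs.ne'
  have prefactor : (r * s) ^ ((1 : ℝ) / 2 - 1) / (2 * τ) * √(2 / (π * (r * s / (2 * τ)))) =
      2 / (r * s * √(4 * π * τ)) := by
    have sqrt_quotient : √(2 / (π * (r * s / (2 * τ)))) = 4 * τ / (√(r * s) * √(4 * π * τ)) := by
      rw [← sqrt_mul hrs.le, eq_div_iff (by positivity), ← sqrt_mul (by positivity),
        sqrt_eq_iff_mul_self_eq_of_pos (by positivity)]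
      field_simp
      ring
    rw [rpow_sub_one hrs.ne', ← sqrt_eq_rpow, sqrt_quotient]
    field_simp
    norm_num
  have order : (1 : ℝ) - 1 / 2 = 1 / 2 := by norm_num
  rw [besselHeat, order, besselI_one_half (by positivity), sinh_eq, heatKernel, heatKernel,
    gaussian_sub, gaussian_add]
  linear_combination exp (-(r ^ 2 + s ^ 2) / (4 * τ)) *
    ((exp (r * s / (2 * τ)) - exp (-(r * s / (2 * τ)))) / 2) * prefactor

theorem integral_rpow_mul_exp_neg_div_Ioi {a p : ℝ} (ha : 0 < a) (hp : 0 < p) :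
    ∫ x in Ioi (0 : ℝ), x ^ (-p - 1) * exp (-(a / x)) = (1 / a) ^ p * Gamma p := by
  rw [← integral_rpow_mul_exp_neg_mul_Ioi hp ha,
    ← integral_comp_rpow_Ioi (fun y => y ^ (p - 1) * exp (-(a * y))) (neg_ne_zero.2 one_ne_zero)]
  refine setIntegral_congr_fun measurableSet_Ioi fun x (hx : 0 < x) => ?_
  have power : x ^ (-p - 1) = x ^ ((-1 : ℝ) - 1) * (x ^ (-1 : ℝ)) ^ (p - 1) := by
    rw [← rpow_mul hx.le, ← rpow_add hx]
    ring_nf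
  simp only [power, rpow_neg_one, abs_neg, abs_one, one_mul, smul_eq_mul, div_eq_mul_inv, mul_assoc]

theorem heatKernel_mul_levyDensity {τ : ℝ} (hτ : 0 < τ) (u t : ℝ) :
    heatKernel τ u * levyDensity t τ =
      t / (4 * π) * (τ ^ (-1 - 1 : ℝ) * exp (-((u ^ 2 + t ^ 2) / 4 / τ))) := by
  have exponent : -((u ^ 2 + t ^ 2) / 4 / τ) = -u ^ 2 / (4 * τ) + -t ^ 2 / (4 * τ) := by
    field_simp
    ring
  have sqrt_four : √(4 * π * τ) = 2 * √π * √τ := by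
    rw [sqrt_mul (by positivity), sqrt_mul zero_le_four, (by norm_num : (4 : ℝ) = 2 ^ 2),
      sqrt_sq zero_le_two]
  have power_three_halves : τ ^ (3 / 2 : ℝ) = τ * √τ := by
    rw [(by norm_num : (3 / 2 : ℝ) = 1 + 1 / 2), rpow_one_add' hτ.le (by norm_num), sqrt_eq_rpow]
  have power_neg_two : τ ^ (-1 - 1 : ℝ) = 1 / τ ^ 2 := by
    rw [rpow_sub_one hτ.ne', rpow_neg_one]
    field_simp
  rw [heatKernel, levyDensity, exponent, exp_add, sqrt_four, power_three_halves, power_neg_two]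
  field_simp
  rw [sq_sqrt pi_pos.le, sq_sqrt hτ.le]
  ring

theorem integral_heatKernel_mul_levyDensity {t : ℝ} (ht : t ≠ 0) (u : ℝ) :
    ∫ τ in Ioi (0 : ℝ), heatKernel τ u * levyDensity t τ = t / (π * (u ^ 2 + t ^ 2)) := by
  have rate_pos : 0 < (u ^ 2 + t ^ 2) / 4 := by positivity
  rw [setIntegral_congr_fun measurableSet_Ioi fun τ hτ => heatKernel_mul_levyDensity hτ u t,
    integral_const_mul, integral_rpow_mul_exp_neg_div_Ioi rate_pos one_pos, Gamma_one, rpow_one]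
  field_simp

theorem integrableOn_heatKernel_mul_levyDensity {t : ℝ} (ht : t ≠ 0) (u : ℝ) :
    IntegrableOn (fun τ => heatKernel τ u * levyDensity t τ) (Ioi 0) := by
  refine .of_integral_ne_zero ?_
  rw [integral_heatKernel_mul_levyDensity ht]
  positivity

theorem subKernel1_one {r s t : ℝ} (hrs : 0 < r * s) (ht : t ≠ 0) :
    subKernel1 1 t r s =
      (t / (π * ((r - s) ^ 2 + t ^ 2)) - t / (π * ((r + s) ^ 2 + t ^ 2))) / (r * s) := by
  have integrand (τ : ℝ) (hτ : τ ∈ Ioi 0) : besselHeat 1 τ r s * levyDensity t τ =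
      (heatKernel τ (r - s) * levyDensity t τ - heatKernel τ (r + s) * levyDensity t τ) /
        (r * s) := by
    rw [besselHeat_one hτ hrs]
    ring
  rw [subKernel1, setIntegral_congr_fun measurableSet_Ioi integrand, integral_div,
    integral_sub (integrableOn_heatKernel_mul_levyDensity ht _)
      (integrableOn_heatKernel_mul_levyDensity ht _),
    integral_heatKernel_mul_levyDensity ht, integral_heatKernel_mul_levyDensity ht]

theorem stmt5 :
    ∀ r s t : ℝ, 0 < r → 0 < s → 0 < t →
      subKernel1 1 t r s
        = 4 / π * t / ((r ^ 2 - s ^ 2) ^ 2 + t ^ 2 * (t ^ 2 + 2 * r ^ 2 + 2 * s ^ 2)) := by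
  intro r s t hr hs ht
  have factorization : (r ^ 2 - s ^ 2) ^ 2 + t ^ 2 * (t ^ 2 + 2 * r ^ 2 + 2 * s ^ 2) =
      ((r - s) ^ 2 + t ^ 2) * ((r + s) ^ 2 + t ^ 2) := by ring
  have : (r - s) ^ 2 + t ^ 2 ≠ 0 := by positivity
  rw [subKernel1_one (mul_pos hr hs) ht.ne', factorization]
  field_simp
  ring
end

section
/- Let ζ ∈ (-1/2, ∞). Then there exist constants c, C > 0 (depending only on ζ) such that for all r, s, t > 0: c · t / ((r²+s²+t²)^ζ · ((r-s)² + t²)) ≤ p_ζ^{(1)}(t,r,s) ≤ C · t / ((r²+s²+t²)^ζ · ((r-s)² + t²)). -/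
open MeasureTheory Real Set Filter

/-!
Write `A = r² + s² + t²` and `z = 2rs / A`. The substitution `τ = 1 / x` turns the subordination
integral into a Laplace transform of `I_ν`, `ν = ζ - 1/2`; integrating the Bessel series term by
term gives `p_ζ^{(1)}(t,r,s) = 2t / (√π A^(ζ+1)) * ∑ c_k z^(2k)` with coefficients
`c_k = Γ(2k+ζ+1) / (4^k k! Γ(k+ζ+1/2))`. Legendre's duplication formula and Euler's limit formula
for `Γ` show that `c_k` converges to a positive limit, so the `c_k` lie between two positive
constants and the series is comparable to `1 / (1 - z²)`. Since `1 ≤ 1 + z ≤ 2`, this is comparable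
to `1 / (1 - z) = A / ((r - s)² + t²)`.
-/

open Asymptotics
open scoped Topology Nat

section Gamma

theorem Gamma_natCast_add_eq_mul_prod {s : ℝ} (hs : 0 < s) (n : ℕ) :
    Gamma (n + s) = Gamma s * ∏ j ∈ Finset.range n, (s + j) := by
  induction n with
  | zero => simp
  | succ n ih =>
    have hne : (n : ℝ) + s ≠ 0 := by positivity
    rw [Finset.prod_range_succ, Nat.cast_succ, add_right_comm, Gamma_add_one hne, ih]
    ring

theorem GammaSeq_eq_mul_Gamma_div_Gamma {s : ℝ} (hs : 0 < s) (n : ℕ) :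
    GammaSeq s n = n ^ s * n ! * Gamma s / Gamma (n + s + 1) := by
  have hprod : ∏ j ∈ Finset.range (n + 1), (s + (j : ℝ)) ≠ 0 :=
    Finset.prod_ne_zero_iff.mpr fun j _ => by positivity
  have hΓ : Gamma s ≠ 0 := (Gamma_pos_of_pos hs).ne'
  rw [add_right_comm, ← Nat.cast_succ, Gamma_natCast_add_eq_mul_prod hs, GammaSeq]
  field_simp

theorem isEquivalent_natCast_add (s : ℝ) :
    (fun n : ℕ => (n : ℝ) + s) ~[atTop] fun n => (n : ℝ) :=
  IsEquivalent.refl.add_isLittleO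
    (isLittleO_const_id_atTop s |>.comp_tendsto tendsto_natCast_atTop_atTop)

theorem isEquivalent_Gamma_natCast_add_of_pos {s : ℝ} (hs : 0 < s) :
    (fun n : ℕ => Gamma (n + s)) ~[atTop] fun n => (n : ℝ) ^ (s - 1) * n ! := by
  have hΓ : Gamma s ≠ 0 := (Gamma_pos_of_pos hs).ne'
  have hseq : (fun n => Gamma s / GammaSeq s n) ~[atTop] fun _ => (1 : ℝ) := by
    rw [← div_self hΓ]
    exact .div .refl ((isEquivalent_const_iff_tendsto hΓ).2 (GammaSeq_tendsto_Gamma s))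
  have hprod := (hseq.mul (IsEquivalent.refl (u := fun n : ℕ => (n : ℝ) ^ s * n !))).div
    (isEquivalent_natCast_add s)
  refine (hprod.congr_left ?_).congr_right ?_
  all_goals
    filter_upwards [eventually_ne_atTop 0] with n hn
    have hn : (0 : ℝ) < n := by positivity
  · have hne : (n : ℝ) + s ≠ 0 := by positivity
    have hΓn : Gamma (n + s) ≠ 0 := (Gamma_pos_of_pos (by positivity)).ne'
    simp only [Pi.mul_apply, Pi.div_apply, GammaSeq_eq_mul_Gamma_div_Gamma hs, Gamma_add_one hne]
    field_simp
  · simp only [Pi.mul_apply, Pi.div_apply, rpow_sub_one hn.ne']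
    ring

theorem isEquivalent_Gamma_natCast_add (s : ℝ) :
    (fun n : ℕ => Gamma (n + s)) ~[atTop] fun n => (n : ℝ) ^ (s - 1) * n ! := by
  obtain ⟨m, hm⟩ := exists_nat_gt (-s)
  induction m generalizing s with
  | zero => exact isEquivalent_Gamma_natCast_add_of_pos (by simpa using hm)
  | succ m ih =>
    have hsucc := (ih (s + 1) (by push_cast at hm; linarith)).div (isEquivalent_natCast_add s)
    refine (hsucc.congr_left ?_).congr_right ?_
    · filter_upwards [tendsto_natCast_atTop_atTop.eventually_gt_atTop (-s)] with n hn
      have hne : (n : ℝ) + s ≠ 0 := by linarith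
      simp only [Pi.div_apply, ← add_assoc, Gamma_add_one hne]
      field_simp
    · filter_upwards [eventually_ne_atTop 0] with n hn
      have hn : (n : ℝ) ≠ 0 := by positivity
      simp only [Pi.div_apply, add_sub_right_comm s 1 1, rpow_add_one hn]
      field_simp

end Gamma

section Series

theorem exists_pos_bounds_of_tendsto {u : ℕ → ℝ} {L : ℝ} (hu : ∀ k, 0 < u k) (hL : 0 < L)
    (hlim : Tendsto u atTop (𝓝 L)) : ∃ m M : ℝ, 0 < m ∧ 0 < M ∧ ∀ k, u k ∈ Icc m M := by
  obtain ⟨M, hM⟩ := hlim.bddAbove_range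
  obtain ⟨N, hN⟩ := (hlim.inv₀ hL.ne').bddAbove_range
  rw [mem_upperBounds, forall_mem_range] at hM hN
  have hN₀ : 0 < N := (inv_pos.2 (hu 0)).trans_le (hN 0)
  exact ⟨N⁻¹, M, inv_pos.2 hN₀, (hu 0).trans_le (hM 0),
    fun k => ⟨inv_le_of_inv_le₀ (hu k) (hN k), hM k⟩⟩

theorem hasSum_mul_pow_mem_Icc {u : ℕ → ℝ} {m M x S : ℝ} (hu : ∀ k, u k ∈ Icc m M) (hx₀ : 0 ≤ x)
    (hx₁ : x < 1) (hS : HasSum (fun k => u k * x ^ k) S) :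
    S ∈ Icc (m * (1 - x)⁻¹) (M * (1 - x)⁻¹) := by
  have hgeom := hasSum_geometric_of_lt_one hx₀ hx₁
  exact ⟨hasSum_le (fun k => by gcongr; exact (hu k).1) (hgeom.mul_left m) hS,
    hasSum_le (fun k => by gcongr; exact (hu k).2) hS (hgeom.mul_left M)⟩

theorem inv_one_sub_sq_mem_Icc {𝕜 : Type*} [Field 𝕜] [LinearOrder 𝕜] [IsStrictOrderedRing 𝕜]
    {z : 𝕜} (hz₀ : 0 ≤ z) (hz₁ : z < 1) : (1 - z ^ 2)⁻¹ ∈ Icc ((1 - z)⁻¹ / 2) (1 - z)⁻¹ := by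
  have hz : 0 < 1 - z := sub_pos.2 hz₁
  rw [div_eq_mul_inv, ← mul_inv]
  exact ⟨inv_anti₀ (by nlinarith) (by nlinarith), inv_anti₀ hz (by nlinarith)⟩

theorem hasSum_mul_sq_pow_mem_Icc {u : ℕ → ℝ} {m M z S : ℝ} (hm : 0 ≤ m)
    (hu : ∀ k, u k ∈ Icc m M) (hz₀ : 0 ≤ z) (hz₁ : z < 1)
    (hS : HasSum (fun k => u k * (z ^ 2) ^ k) S) :
    S ∈ Icc (m * ((1 - z)⁻¹ / 2)) (M * (1 - z)⁻¹) := by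
  have hM : 0 ≤ M := hm.trans ((hu 0).1.trans (hu 0).2)
  obtain ⟨hgeom_ge, hgeom_le⟩ := inv_one_sub_sq_mem_Icc hz₀ hz₁
  obtain ⟨hS_ge, hS_le⟩ :=
    hasSum_mul_pow_mem_Icc hu (sq_nonneg z) (pow_lt_one₀ hz₀ hz₁ two_ne_zero) hS
  exact ⟨(mul_le_mul_of_nonneg_left hgeom_ge hm).trans hS_ge,
    hS_le.trans (mul_le_mul_of_nonneg_left hgeom_le hM)⟩

theorem summable_rpow_mul_geometric_of_norm_lt_one (α : ℝ) {x : ℝ} (hx : ‖x‖ < 1) :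
    Summable fun k : ℕ => (k : ℝ) ^ α * x ^ k := by
  obtain ⟨N, hN⟩ := exists_nat_gt α
  refine summable_of_isBigO_nat (summable_pow_mul_geometric_of_norm_lt_one N hx)
    (IsBigO.mul ?_ (isBigO_refl _ _))
  refine .of_bound 1 ?_
  filter_upwards [eventually_ge_atTop 1] with k hk
  have hk : (1 : ℝ) ≤ k := mod_cast hk
  rw [one_mul, norm_of_nonneg (by positivity), norm_of_nonneg (by positivity), ← rpow_natCast]
  exact rpow_le_rpow_of_exponent_le hk hN.le

end Series

/-- The coefficients of the Lipschitz–Hankel integral `∫₀^∞ x ^ (q - ν - 1) e ^ (-b x) I_ν(a x) dx`,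
up to normalization, as a power series in `(a / b) ^ 2`. -/
noncomputable def besselLaplaceCoeff (ν q : ℝ) (k : ℕ) : ℝ :=
  Gamma (2 * k + q) / (4 ^ k * (k ! * Gamma (k + ν + 1)))

section Coefficients

variable {ν q : ℝ}

theorem besselLaplaceCoeff_pos (hν : -1 < ν) (hq : 0 < q) (k : ℕ) :
    0 < besselLaplaceCoeff ν q k := by
  have hnum : 0 < Gamma (2 * k + q) := Gamma_pos_of_pos (by positivity)
  have hden : 0 < Gamma (k + ν + 1) := Gamma_pos_of_pos (by linarith [k.cast_nonneg (α := ℝ)])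
  exact div_pos hnum (by positivity)

theorem besselLaplaceCoeff_eq_duplication (ν q : ℝ) (k : ℕ) :
    besselLaplaceCoeff ν q k = 2 ^ (q - 1) / √π *
      (Gamma (k + q / 2) * Gamma (k + (q + 1) / 2) / (k ! * Gamma (k + (ν + 1)))) := by
  have hdup := Gamma_mul_Gamma_add_half (k + q / 2)
  have hpow : (2 : ℝ) ^ (1 - 2 * (k + q / 2)) = (4 ^ k * 2 ^ (q - 1))⁻¹ := by
    rw [show (4 : ℝ) ^ k = 2 ^ (2 * k : ℝ) by rw [rpow_mul zero_le_two, rpow_natCast]; norm_num,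
      ← rpow_add two_pos, ← rpow_neg zero_le_two]
    ring_nf
  rw [show (k : ℝ) + q / 2 + 1 / 2 = k + (q + 1) / 2 by ring, hpow,
    show 2 * ((k : ℝ) + q / 2) = 2 * k + q by ring] at hdup
  have hπ : √π ≠ 0 := by positivity
  rw [besselLaplaceCoeff, hdup, add_assoc]
  field_simp

theorem isEquivalent_besselLaplaceCoeff (ν q : ℝ) :
    besselLaplaceCoeff ν q ~[atTop] fun k => 2 ^ (q - 1) / √π * (k : ℝ) ^ (q - ν - 3 / 2) := by
  have hΓ := ((isEquivalent_Gamma_natCast_add (q / 2)).mul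
    (isEquivalent_Gamma_natCast_add ((q + 1) / 2))).div
      ((IsEquivalent.refl (u := fun k : ℕ => (k ! : ℝ))).mul
        (isEquivalent_Gamma_natCast_add (ν + 1)))
  have hc : besselLaplaceCoeff ν q = _ := funext (besselLaplaceCoeff_eq_duplication ν q)
  rw [hc]
  refine IsEquivalent.mul .refl (hΓ.congr_right ?_)
  filter_upwards [eventually_ne_atTop 0] with k hk
  have hk : (0 : ℝ) < k := by positivity
  have hpow : (k : ℝ) ^ (q / 2 - 1) * (k : ℝ) ^ ((q + 1) / 2 - 1)
      = (k : ℝ) ^ (q - ν - 3 / 2) * (k : ℝ) ^ (ν + 1 - 1) := by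
    rw [← rpow_add hk, ← rpow_add hk]
    ring_nf
  simp only [Pi.mul_apply, Pi.div_apply]
  rw [mul_mul_mul_comm, hpow]
  field_simp

theorem tendsto_besselLaplaceCoeff (hq : q = ν + 3 / 2) :
    Tendsto (besselLaplaceCoeff ν q) atTop (𝓝 (2 ^ (q - 1) / √π)) := by
  have hc := isEquivalent_besselLaplaceCoeff ν q
  rw [show q - ν - 3 / 2 = 0 by linarith] at hc
  simp only [rpow_zero, mul_one] at hc
  exact hc.tendsto_const

theorem summable_besselLaplaceCoeff_mul_pow (ν q : ℝ) {x : ℝ} (hx : ‖x‖ < 1) :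
    Summable fun k => besselLaplaceCoeff ν q k * x ^ k :=
  summable_of_isBigO_nat (summable_rpow_mul_geometric_of_norm_lt_one (q - ν - 3 / 2) hx)
    (((isEquivalent_besselLaplaceCoeff ν q).isBigO.trans (isBigO_const_mul_self _ _ _)).mul
      (isBigO_refl _ _))

end Coefficients

section LaplaceTransform

variable {p ν a b : ℝ}

theorem rpow_mul_exp_neg_mul_mul_besselI_eq_tsum (ha : 0 < a) {x : ℝ} (hx : 0 < x) :
    x ^ (p - 1) * exp (-(b * x)) * besselI ν (a * x) =
      ∑' k : ℕ, (a / 2) ^ (2 * k + ν) / (k ! * Gamma (k + ν + 1)) *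
        (x ^ (2 * k + (p + ν) - 1) * exp (-(b * x))) := by
  rw [besselI, ← tsum_mul_left]
  refine tsum_congr fun k => ?_
  have hax : (a * x / 2) ^ (2 * k + ν) = (a / 2) ^ (2 * k + ν) * x ^ (2 * k + ν) := by
    rw [← mul_rpow (by positivity) hx.le, div_mul_eq_mul_div]
  have hpow : x ^ (2 * k + (p + ν) - 1) = x ^ (p - 1) * x ^ (2 * k + ν) := by
    rw [← rpow_add hx]
    ring_nf
  rw [hax, hpow]
  ring

theorem besselI_term_mul_integral_eq (ha : 0 < a) (hb : 0 < b) (hp : 0 < p + ν) (k : ℕ) :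
    (a / 2) ^ (2 * k + ν) / (k ! * Gamma (k + ν + 1)) *
        ∫ x in Ioi (0 : ℝ), x ^ (2 * k + (p + ν) - 1) * exp (-(b * x)) =
      (a / 2) ^ ν / b ^ (p + ν) * (besselLaplaceCoeff ν (p + ν) k * ((a / b) ^ 2) ^ k) := by
  have hapow : (a / 2) ^ (2 * k + ν) = (a / 2) ^ ν * (a ^ (2 * k) / 4 ^ k) := by
    have h4 : (4 : ℝ) ^ k = 2 ^ (2 * k) := by rw [pow_mul]; norm_num
    rw [add_comm, rpow_add (by positivity), h4, ← div_pow]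
    norm_cast
  have hbpow : (1 / b) ^ (2 * k + (p + ν)) = (b ^ (2 * k) * b ^ (p + ν))⁻¹ := by
    rw [one_div, inv_rpow hb.le, rpow_add hb]
    norm_cast
  rw [integral_rpow_mul_exp_neg_mul_Ioi (by positivity) hb, hapow, hbpow, besselLaplaceCoeff,
    ← pow_mul, div_pow]
  ring

theorem hasSum_integral_rpow_mul_exp_neg_mul_mul_besselI (ha : 0 < a) (hab : a < b)
    (hp : 0 < p + ν) :
    HasSum
      (fun k => (a / 2) ^ ν / b ^ (p + ν) * (besselLaplaceCoeff ν (p + ν) k * ((a / b) ^ 2) ^ k))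
      (∫ x in Ioi (0 : ℝ), x ^ (p - 1) * exp (-(b * x)) * besselI ν (a * x)) := by
  have hb : 0 < b := ha.trans hab
  have hlt : ‖(a / b) ^ 2‖ < 1 := by
    rw [norm_of_nonneg (by positivity)]
    exact pow_lt_one₀ (by positivity) ((div_lt_one hb).2 hab) two_ne_zero
  have hsum := (summable_besselLaplaceCoeff_mul_pow ν (p + ν) hlt).mul_left
    ((a / 2) ^ ν / b ^ (p + ν))
  rw [setIntegral_congr_fun measurableSet_Ioi fun x hx =>
    rpow_mul_exp_neg_mul_mul_besselI_eq_tsum ha hx]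
  simp only [← besselI_term_mul_integral_eq ha hb hp, ← integral_const_mul] at hsum ⊢
  refine hasSum_integral_of_summable_integral_norm (fun k => Integrable.const_mul ?_ _) ?_
  · refine .of_integral_ne_zero ?_
    rw [integral_rpow_mul_exp_neg_mul_Ioi (by positivity) hb]
    have hΓ : 0 < Gamma (2 * k + (p + ν)) := Gamma_pos_of_pos (by positivity)
    exact (mul_pos (by positivity) hΓ).ne'
  · refine hsum.norm.congr fun k => ?_
    have hnonneg : ∀ x ∈ Ioi (0 : ℝ), 0 ≤ x ^ (2 * k + (p + ν) - 1) * exp (-(b * x)) :=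
      fun x hx => mul_nonneg (rpow_nonneg (le_of_lt hx) _) (exp_pos _).le
    simp only [norm_mul _ (_ * exp _), integral_const_mul]
    rw [norm_mul, norm_of_nonneg (setIntegral_nonneg measurableSet_Ioi hnonneg),
      setIntegral_congr_fun measurableSet_Ioi fun x hx => norm_of_nonneg (hnonneg x hx)]

end LaplaceTransform

section Kernel

variable {ζ r s t : ℝ}

theorem subKernel1_eq_integral_besselI (ζ t r s : ℝ) :
    subKernel1 ζ t r s = t * (r * s) ^ (1 / 2 - ζ) / (4 * √π) *
      ∫ x in Ioi (0 : ℝ), x ^ ((3 / 2 : ℝ) - 1) * exp (-((r ^ 2 + s ^ 2 + t ^ 2) / 4 * x)) *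
        besselI (ζ - 1 / 2) (r * s / 2 * x) := by
  rw [subKernel1, ← integral_const_mul, ← integral_comp_rpow_Ioi _ (neg_ne_zero.2 one_ne_zero)]
  refine setIntegral_congr_fun measurableSet_Ioi fun x hx => ?_
  have hx : 0 < x := hx
  have hexp : exp (-((r ^ 2 + s ^ 2 + t ^ 2) / 4 * x))
      = exp (-(r ^ 2 + s ^ 2) / (4 * x⁻¹)) * exp (-t ^ 2 / (4 * x⁻¹)) := by
    rw [← exp_add]
    congr 1
    field_simp
    ring
  have hbessel : r * s / (2 * x⁻¹) = r * s / 2 * x := by field_simp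
  have hpow : x ^ ((3 / 2 : ℝ) - 1) = x ^ (-1 - 1 : ℝ) * x * x ^ (3 / 2 : ℝ) := by
    rw [← rpow_add_one hx.ne', ← rpow_add hx]
    norm_num
  simp only [smul_eq_mul, abs_neg, abs_one, one_mul, besselHeat, levyDensity, rpow_neg_one,
    inv_rpow hx.le, hbessel, hexp, hpow]
  field_simp
  ring

theorem two_mul_mul_lt_sq_add_sq_add_sq (r s : ℝ) (ht : t ≠ 0) :
    2 * (r * s) < r ^ 2 + s ^ 2 + t ^ 2 := by
  linarith [two_mul_le_add_sq r s, sq_pos_of_ne_zero ht]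

theorem subKernel1_eq_tsum (hζ : -1 < ζ) (hr : 0 < r) (hs : 0 < s) (ht : t ≠ 0) :
    subKernel1 ζ t r s = 2 * t / (√π * (r ^ 2 + s ^ 2 + t ^ 2) ^ (ζ + 1)) *
      ∑' k, besselLaplaceCoeff (ζ - 1 / 2) (ζ + 1) k *
        ((2 * (r * s) / (r ^ 2 + s ^ 2 + t ^ 2)) ^ 2) ^ k := by
  have hlt := two_mul_mul_lt_sq_add_sq_add_sq r s ht
  have hA : 0 < r ^ 2 + s ^ 2 + t ^ 2 := by positivity
  have hrs : 0 < r * s := mul_pos hr hs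
  have hexponent : 3 / 2 + (ζ - 1 / 2) = ζ + 1 := by ring
  have hint := (hasSum_integral_rpow_mul_exp_neg_mul_mul_besselI (p := 3 / 2) (ν := ζ - 1 / 2)
    (a := r * s / 2) (b := (r ^ 2 + s ^ 2 + t ^ 2) / 4) (by positivity) (by linarith)
    (by linarith)).tsum_eq
  rw [tsum_mul_left, hexponent] at hint
  rw [subKernel1_eq_integral_besselI, ← hint]
  generalize r ^ 2 + s ^ 2 + t ^ 2 = A at *
  have hratio : r * s / 2 / (A / 4) = 2 * (r * s) / A := by field_simp; norm_num
  have hrspow : (r * s) ^ (1 / 2 - ζ) * (r * s / 2 / 2) ^ (ζ - 1 / 2) = (4 ^ (ζ - 1 / 2))⁻¹ := by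
    rw [div_div, div_rpow hrs.le (by norm_num), ← neg_sub ζ, rpow_neg hrs.le]
    norm_num
    field_simp
  have hfour : (4 : ℝ) ^ (ζ + 1) = 8 * 4 ^ (ζ - 1 / 2) := by
    have h8 : (4 : ℝ) ^ (3 / 2 : ℝ) = 8 := by
      rw [show (4 : ℝ) = 2 ^ (2 : ℝ) by norm_num, ← rpow_mul zero_le_two]
      norm_num
    rw [← h8, ← rpow_add four_pos, hexponent]
  have hprefactor : t * (r * s) ^ (1 / 2 - ζ) / (4 * √π) *
      ((r * s / 2 / 2) ^ (ζ - 1 / 2) / (A / 4) ^ (ζ + 1)) = 2 * t / (√π * A ^ (ζ + 1)) := by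
    rw [div_mul_div_comm, mul_assoc, hrspow, div_rpow hA.le (by norm_num), hfour]
    field_simp
    norm_num
  rw [hratio, ← mul_assoc, hprefactor]

theorem rpow_mul_sub_sq_add_sq (ζ r s : ℝ) (ht : t ≠ 0) :
    (r ^ 2 + s ^ 2 + t ^ 2) ^ ζ * ((r - s) ^ 2 + t ^ 2) =
      (r ^ 2 + s ^ 2 + t ^ 2) ^ (ζ + 1) * (1 - 2 * (r * s) / (r ^ 2 + s ^ 2 + t ^ 2)) := by
  have hA : r ^ 2 + s ^ 2 + t ^ 2 ≠ 0 := by positivity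
  rw [rpow_add_one hA]
  field_simp
  ring

theorem subKernel1_mem_Icc {m M : ℝ} (hζ : -1 < ζ) (hm : 0 ≤ m)
    (hcoeff : ∀ k, besselLaplaceCoeff (ζ - 1 / 2) (ζ + 1) k ∈ Icc m M)
    (hr : 0 < r) (hs : 0 < s) (ht : 0 < t) :
    subKernel1 ζ t r s ∈ Icc
      (m / √π * t / ((r ^ 2 + s ^ 2 + t ^ 2) ^ ζ * ((r - s) ^ 2 + t ^ 2)))
      (2 * M / √π * t / ((r ^ 2 + s ^ 2 + t ^ 2) ^ ζ * ((r - s) ^ 2 + t ^ 2))) := by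
  have hz₁ := (div_lt_one (by positivity)).2 (two_mul_mul_lt_sq_add_sq_add_sq r s ht.ne')
  rw [rpow_mul_sub_sq_add_sq ζ r s ht.ne', subKernel1_eq_tsum hζ hr hs ht.ne']
  set A := r ^ 2 + s ^ 2 + t ^ 2
  set z := 2 * (r * s) / A
  have hz₀ : 0 ≤ z := by positivity
  have hz : ‖z ^ 2‖ < 1 := by
    rw [norm_pow, norm_of_nonneg hz₀]
    exact pow_lt_one₀ hz₀ hz₁ two_ne_zero
  have hz' : 1 - z ≠ 0 := (sub_pos.2 hz₁).ne'
  obtain ⟨hlower, hupper⟩ := hasSum_mul_sq_pow_mem_Icc hm hcoeff hz₀ hz₁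
    (summable_besselLaplaceCoeff_mul_pow (ζ - 1 / 2) (ζ + 1) hz).hasSum
  constructor
  · calc
      m / √π * t / (A ^ (ζ + 1) * (1 - z))
          = 2 * t / (√π * A ^ (ζ + 1)) * (m * ((1 - z)⁻¹ / 2)) := by field_simp
      _ ≤ _ := by gcongr
  · calc
      _ ≤ 2 * t / (√π * A ^ (ζ + 1)) * (M * (1 - z)⁻¹) := by gcongr
      _ = 2 * M / √π * t / (A ^ (ζ + 1) * (1 - z)) := by field_simp

end Kernel

theorem stmt8 (ζ : ℝ) (hζ : -1/2 < ζ) :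
    ∃ c C : ℝ, 0 < c ∧ 0 < C ∧
      ∀ r s t : ℝ, 0 < r → 0 < s → 0 < t →
        c * t / ((r ^ 2 + s ^ 2 + t ^ 2) ^ ζ * ((r - s) ^ 2 + t ^ 2))
            ≤ subKernel1 ζ t r s ∧
          subKernel1 ζ t r s
            ≤ C * t / ((r ^ 2 + s ^ 2 + t ^ 2) ^ ζ * ((r - s) ^ 2 + t ^ 2)) := by
  obtain ⟨m, M, hm, hM, hcoeff⟩ := exists_pos_bounds_of_tendsto
    (besselLaplaceCoeff_pos (ν := ζ - 1 / 2) (q := ζ + 1) (by linarith) (by linarith))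
    (by positivity) (tendsto_besselLaplaceCoeff (by ring))
  exact ⟨m / √π, 2 * M / √π, by positivity, by positivity, fun r s t hr hs ht =>
    subKernel1_mem_Icc (by linarith) hm.le hcoeff hr hs ht⟩
end
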